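/- arXiv:2304.00621 — 5 statements merged into one kernel-verified Lean document; each statement's English description precedes it below -/
import Mathlib

section
/- Let n≥1, β∈(0,∞)^n, α≥0 and 1≤s<∞. There exists C≥1, depending only on n, β, α and s, such that for every locally integrable b:ℝ^n→ℂ the following two-sided estimate holds in [0,∞]: C^{−1}·‖b‖_{BMO^{β,α}} ≤ sup_{Q∈R^β} |Q|^{−α/|β|}·((1/|Q|)∫_Q|b−⟨b⟩_Q|^s)^{1/s} ≤ C·‖b‖_{BMO^{β,α}}. -/
/-!
The lower bound is monotonicity of `L^p` norms for a probability measure. For the upper bound,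
fix a `β`-cube `Q` and a finite `M > 0` that dominates every `L¹`-oscillation.

`β`-cubes cannot in general be subdivided into `β`-cubes, so `ℝⁿ` is partitioned at level `k` into
half-open translates of the rectangle with sides `ℓ(Q)^{β i} / 2^⌊k β i⌋` (`betaGrid`). These
partitions are nested and doubling (`isGrid_betaGrid`), `Q` is a cell of level `0` up to a null
set, and every cell of level `k` lies in a `β`-cube of sidelength comparable to `2^{-k} ℓ(Q)` and
of comparable volume (`hull`). Since `α ≥ 0`, the mean oscillation of `b` over every cell is
therefore at most a constant `A` comparable to `M ℓ(Q)^α`.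

The remaining argument only concerns a nested doubling sequence of partitions. Write `f_N` for the
average of `f` over the cell of level `N` around a point. The bound
`∫_R |f_N - f_R|^s ≤ C A^s |R|` is proved for cells `R` of level `k ≤ N` by descending induction
on `k`, with `C` independent of `N` (`IsGrid.stopping`): pass to smaller cells until the mean of
`|f - f_R|` exceeds `2^s A`. On a stopped cell `S` doubling gives `|f_S - f_R| ≤ D 2^s A`, and
`|f_N - f_S|` is controlled by induction. The stopped cells occupy at most the fraction `2^{-s}`
of `R`, which absorbs the factor `2^{s-1}` coming from `(u + v)^s ≤ 2^{s-1}(u^s + v^s)` and leaves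
half of `C` to spare. Finally `f_N → f` in `L¹`, by approximation with continuous functions, and
Fatou's lemma concludes (`IsGrid.lintegral_sub_rpow_le`).
-/

open MeasureTheory ENNReal

noncomputable section


/-- A `β`-cube in `ℝⁿ`: an axis-parallel rectangle centred at `c` whose `i`-th side
has length `l ^ β i`, where `l > 0` is the sidelength parameter `ℓ(Q)`. -/
structure BetaCube (n : ℕ) (β : Fin n → ℝ) where
  c : EuclideanSpace ℝ (Fin n)
  l : ℝ
  l_pos : 0 < l

namespace BetaCube

variable {n : ℕ} {β : Fin n → ℝ}

/-- The underlying set of a `β`-cube. -/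
def set (Q : BetaCube n β) : Set (EuclideanSpace ℝ (Fin n)) :=
  {x | ∀ i, |x i - Q.c i| ≤ Q.l ^ (β i) / 2}

/-- Translation `Q + v` of a `β`-cube. -/
def translate (Q : BetaCube n β) (v : EuclideanSpace ℝ (Fin n)) : BetaCube n β :=
  ⟨Q.c + v, Q.l, Q.l_pos⟩

end BetaCube

/-- The average `⟨b⟩_Q` of `b` over a `β`-cube `Q`. -/
def cubeAvg {n : ℕ} {β : Fin n → ℝ} (Q : BetaCube n β)
    (b : EuclideanSpace ℝ (Fin n) → ℂ) : ℂ :=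
  ⨍ x in Q.set, b x

/-- The fractional mean oscillation
`O^{β,α}(b;Q) = |Q|^{-α/|β|} · (1/|Q|) ∫_Q |b - ⟨b⟩_Q|`, where `|Q| = ℓ(Q)^{|β|}`. -/
def osc {n : ℕ} (β : Fin n → ℝ) (α : ℝ) (b : EuclideanSpace ℝ (Fin n) → ℂ)
    (Q : BetaCube n β) : ℝ :=
  (Q.l ^ (∑ i, β i)) ^ (-(α / (∑ i, β i))) * ⨍ x in Q.set, ‖b x - cubeAvg Q b‖

/-- `b ∈ VMO^{β,α}(ℝⁿ)`: `b` is locally integrable, has finite `BMO^{β,α}` seminorm,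
and satisfies the three vanishing conditions (small scales, large scales, far away). -/
def MemVMO {n : ℕ} (β : Fin n → ℝ) (α : ℝ) (b : EuclideanSpace ℝ (Fin n) → ℂ) : Prop :=
  LocallyIntegrable b volume ∧
  (∃ M : ℝ, ∀ Q : BetaCube n β, osc β α b Q ≤ M) ∧
  (∀ ε > (0:ℝ), ∃ r > (0:ℝ), ∀ Q : BetaCube n β, Q.l ≤ r → osc β α b Q ≤ ε) ∧
  (∀ ε > (0:ℝ), ∃ r > (0:ℝ), ∀ Q : BetaCube n β, r ≤ Q.l → osc β α b Q ≤ ε) ∧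
  (∀ Q : BetaCube n β, ∀ ε > (0:ℝ), ∃ R : ℝ, ∀ x : EuclideanSpace ℝ (Fin n),
    R ≤ ‖x‖ → osc β α b (Q.translate x) ≤ ε)


/-- The `L^s`-oscillation `|Q|^{-α/|β|} ((1/|Q|) ∫_Q |b - ⟨b⟩_Q|^s)^{1/s}`,
valued in `[0,∞]`, where `|Q| = ℓ(Q)^{|β|}`. -/
def eOsc {n : ℕ} (β : Fin n → ℝ) (α s : ℝ) (b : EuclideanSpace ℝ (Fin n) → ℂ)
    (Q : BetaCube n β) : ℝ≥0∞ :=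
  ENNReal.ofReal (Q.l ^ (∑ i, β i)) ^ (-(α / (∑ i, β i))) *
    ((ENNReal.ofReal (Q.l ^ (∑ i, β i)))⁻¹ *
      ∫⁻ x in Q.set, (‖b x - cubeAvg Q b‖₊ : ℝ≥0∞) ^ s) ^ (1 / s)



/-! ### Nested partitions -/

/-- The cell containing `x` of the level-`k` partition, the partition being given as the fibres of
the labelling map `π k`. -/
def gridCell {Ω ι : Type*} (π : ℕ → Ω → ι) (k : ℕ) (x : Ω) : Set Ω := π k ⁻¹' {π k x}

/-- The fibres of the labelling maps `π k` form a nested sequence of measurable partitions whose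
cells have positive finite measure, at most `D` times that of any of their children. -/
structure IsGrid {Ω ι : Type*} [MeasurableSpace Ω] (μ : Measure Ω) (D : ℝ≥0∞)
    (π : ℕ → Ω → ι) : Prop where
  meas : ∀ k i, MeasurableSet (π k ⁻¹' {i})
  nest : ∀ k x y, π (k + 1) x = π (k + 1) y → π k x = π k y
  pos : ∀ k x, μ (gridCell π k x) ≠ 0
  fin : ∀ k x, μ (gridCell π k x) ≠ ∞
  dbl : ∀ k x, μ (gridCell π k x) ≤ D * μ (gridCell π (k + 1) x)

/-- The average of `f` over the cell of level `k` containing `x`. -/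
def cellAvg {Ω ι : Type*} [MeasurableSpace Ω] (μ : Measure Ω) (π : ℕ → Ω → ι) (f : Ω → ℂ)
    (k : ℕ) (x : Ω) : ℂ := ⨍ y in gridCell π k x, f y ∂μ

section grid

lemma mem_gridCell_self {Ω ι : Type*} {π : ℕ → Ω → ι} (k : ℕ) (x : Ω) : x ∈ gridCell π k x := rfl

lemma gridCell_congr {Ω ι : Type*} {π : ℕ → Ω → ι} {k : ℕ} {x y : Ω}
    (h : y ∈ gridCell π k x) : gridCell π k y = gridCell π k x := by
  have : π k y = π k x := h
  simp [gridCell, this]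

variable {Ω ι : Type*} [MeasurableSpace Ω] {μ : Measure Ω} {D : ℝ≥0∞} {π : ℕ → Ω → ι}
  {f : Ω → ℂ}

lemma cellAvg_congr {k : ℕ} {x y : Ω} (h : y ∈ gridCell π k x) :
    cellAvg μ π f k y = cellAvg μ π f k x := by
  simp [cellAvg, gridCell_congr h]

lemma IsGrid.measurableSet (h : IsGrid μ D π) (k : ℕ) (x : Ω) :
    MeasurableSet (gridCell π k x) := h.meas k _

lemma IsGrid.subset (h : IsGrid μ D π) {k m : ℕ} (hkm : k ≤ m) (x : Ω) :
    gridCell π m x ⊆ gridCell π k x := by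
  induction m, hkm using Nat.le_induction with
  | base => exact subset_rfl
  | succ m _ ih => exact fun y hy => ih (h.nest m y x hy)

lemma IsGrid.subset_of_mem (h : IsGrid μ D π) {k m : ℕ} (hkm : k ≤ m) {x y : Ω}
    (hy : y ∈ gridCell π k x) : gridCell π m y ⊆ gridCell π k x :=
  gridCell_congr hy ▸ h.subset hkm y

/-- An inequality between integrals over each cell of a countable partition can be summed over any
set `S` that is a union of cells. No measurability of the integrands is needed. -/
lemma setLIntegral_le_of_cells [Countable ι] {p : Ω → ι} (hp : ∀ i, MeasurableSet (p ⁻¹' {i}))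
    {S : Set Ω} (hS : ∀ x ∈ S, p ⁻¹' {p x} ⊆ S) {φ ψ : Ω → ℝ≥0∞}
    (hle : ∀ x ∈ S, ∫⁻ y in p ⁻¹' {p x}, φ y ∂μ ≤ ∫⁻ y in p ⁻¹' {p x}, ψ y ∂μ) :
    ∫⁻ y in S, φ y ∂μ ≤ ∫⁻ y in S, ψ y ∂μ := by
  have hU : S = ⋃ i : p '' S, p ⁻¹' {(i : ι)} := by
    ext x
    simp only [Set.mem_iUnion, Set.mem_preimage, Set.mem_singleton_iff, Subtype.exists,
      exists_prop, exists_eq_right']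
    exact ⟨fun hx => ⟨x, hx, rfl⟩, fun ⟨y, hy, hyx⟩ => hS y hy hyx.symm⟩
  have hd : Pairwise (Function.onFun Disjoint fun i : p '' S => p ⁻¹' {(i : ι)}) := by
    intro i j hij
    refine Disjoint.preimage _ ?_
    simpa [Subtype.ext_iff] using hij
  rw [hU, lintegral_iUnion (fun i : p '' S => hp i) hd,
    lintegral_iUnion (fun i : p '' S => hp i) hd]
  refine ENNReal.tsum_le_tsum ?_
  rintro ⟨i, x, hx, rfl⟩
  exact hle x hx

lemma enorm_setAverage_sub_mul_le {S : Set Ω} (h0 : μ S ≠ 0) (h1 : μ S ≠ ∞)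
    (hf : IntegrableOn f S μ) (a : ℂ) :
    ‖(⨍ y in S, f y ∂μ) - a‖ₑ * μ S ≤ ∫⁻ y in S, ‖f y - a‖ₑ ∂μ := by
  have hr : μ.real S ≠ 0 := by simp [measureReal_def, ENNReal.toReal_eq_zero_iff, h0, h1]
  have e1 : (μ.real S) • ((⨍ y in S, f y ∂μ) - a) = ∫ y in S, (f y - a) ∂μ := by
    rw [integral_sub hf (integrableOn_const h1), setAverage_eq, smul_sub, smul_inv_smul₀ hr]
    simp
  have e2 : ‖(μ.real S) • ((⨍ y in S, f y ∂μ) - a)‖ₑ = ‖(⨍ y in S, f y ∂μ) - a‖ₑ * μ S := by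
    rw [enorm_smul, mul_comm, Real.enorm_eq_ofReal measureReal_nonneg,
      ofReal_measureReal h1]
  rw [← e2, e1]
  exact enorm_integral_le_lintegral_enorm _

/-- Replacing an arbitrary constant by the average at most doubles the mean oscillation. -/
lemma lintegral_sub_setAverage_le {S : Set Ω} (h0 : μ S ≠ 0) (h1 : μ S ≠ ∞)
    (hf : IntegrableOn f S μ) (a : ℂ) :
    ∫⁻ y in S, ‖f y - ⨍ z in S, f z ∂μ‖ₑ ∂μ ≤ 2 * ∫⁻ y in S, ‖f y - a‖ₑ ∂μ := by
  calc ∫⁻ y in S, ‖f y - ⨍ z in S, f z ∂μ‖ₑ ∂μ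
      ≤ ∫⁻ y in S, (‖f y - a‖ₑ + ‖(⨍ z in S, f z ∂μ) - a‖ₑ) ∂μ := by
        refine lintegral_mono fun y => ?_
        have : f y - ⨍ z in S, f z ∂μ = (f y - a) - ((⨍ z in S, f z ∂μ) - a) := by ring
        rw [this]
        exact enorm_sub_le
    _ = (∫⁻ y in S, ‖f y - a‖ₑ ∂μ) + ‖(⨍ z in S, f z ∂μ) - a‖ₑ * μ S := by
        rw [lintegral_add_right _ measurable_const]; simp
    _ ≤ 2 * ∫⁻ y in S, ‖f y - a‖ₑ ∂μ := by
        rw [two_mul]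
        gcongr
        exact enorm_setAverage_sub_mul_le h0 h1 hf a

/-! ### The stopping-time argument -/

/-- The constant `C` of the dyadic `L^s` estimate: with `λ = 2^s` it is the solution of
`λ^s + (C + (D λ)^s) / 2 = C` (see `jnConst_step`). -/
def jnConst (D : ℝ≥0∞) (s : ℝ) : ℝ≥0∞ :=
  2 * ((2 : ℝ≥0∞) ^ s) ^ s + D ^ s * ((2 : ℝ≥0∞) ^ s) ^ s

/-- The bound for the mean of `|f_N - a|^s` over a stopped cell `S`, obtained from
`|f_N - a| ≤ |f_N - f_S| + |f_S - a|` with `|f_S - a| ≤ D 2^s A`. -/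
def jnStop (D A : ℝ≥0∞) (s : ℝ) : ℝ≥0∞ :=
  2 ^ (s - 1) * (jnConst D s * A ^ s + (D * (2 ^ s * A)) ^ s)

/-- The contribution of the cells that are never stopped plus that of the stopped cells, whose total
measure is at most `A / (2^s A)` times the measure of the starting cell, reproduces `jnConst`. -/
lemma jnConst_step {A : ℝ≥0∞} (hA0 : A ≠ 0) (hA : A ≠ ∞) {s : ℝ} (hs : 1 ≤ s) :
    (2 ^ s * A) ^ s + jnStop D A s / (2 ^ s * A) * A = jnConst D s * A ^ s := by
  have hs0 : 0 ≤ s := by linarith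
  have h2 : (2 : ℝ≥0∞) ^ s ≠ 0 := by simp
  have h2' : (2 : ℝ≥0∞) ^ s ≠ ∞ := by simp
  have e1 : jnStop D A s / (2 ^ s * A) * A =
      2⁻¹ * (jnConst D s * A ^ s + (D * (2 ^ s * A)) ^ s) := by
    rw [div_eq_mul_inv, ENNReal.mul_inv (Or.inl h2) (Or.inl h2'), mul_assoc, mul_assoc,
      ENNReal.inv_mul_cancel hA0 hA, mul_one, jnStop, ENNReal.rpow_sub _ _ (by simp) (by simp),
      ENNReal.rpow_one, div_eq_mul_inv]
    calc 2 ^ s * 2⁻¹ * (jnConst D s * A ^ s + (D * (2 ^ s * A)) ^ s) * (2 ^ s)⁻¹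
        = (2 ^ s * (2 ^ s)⁻¹) * (2⁻¹ * (jnConst D s * A ^ s + (D * (2 ^ s * A)) ^ s)) := by ring
      _ = _ := by rw [ENNReal.mul_inv_cancel h2 h2', one_mul]
  rw [e1, jnConst, ENNReal.mul_rpow_of_nonneg _ _ hs0, ENNReal.mul_rpow_of_nonneg _ _ hs0,
    ENNReal.mul_rpow_of_nonneg _ _ hs0]
  set X := ((2 : ℝ≥0∞) ^ s) ^ s
  calc X * A ^ s + 2⁻¹ * ((2 * X + D ^ s * X) * A ^ s + D ^ s * (X * A ^ s))
      = X * A ^ s + (2⁻¹ * 2) * (X * A ^ s + D ^ s * (X * A ^ s)) := by ring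
    _ = (2 * X + D ^ s * X) * A ^ s := by
      rw [ENNReal.inv_mul_cancel (by simp) (by simp)]; ring

lemma jnConst_ne_top (hD : D ≠ ∞) {s : ℝ} (hs : 1 ≤ s) : jnConst D s ≠ ∞ := by
  have hs0 : 0 ≤ s := by linarith
  have h2 : ((2 : ℝ≥0∞) ^ s) ^ s ≠ ∞ := ENNReal.rpow_ne_top_of_nonneg hs0 (by simp)
  exact ENNReal.add_ne_top.2 ⟨ENNReal.mul_ne_top (by simp) h2,
    ENNReal.mul_ne_top (ENNReal.rpow_ne_top_of_nonneg hs0 hD) h2⟩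

lemma jnStop_ne_top (hD : D ≠ ∞) {A : ℝ≥0∞} (hA : A ≠ ∞) {s : ℝ} (hs : 1 ≤ s) :
    jnStop D A s ≠ ∞ := by
  have hs0 : 0 ≤ s := by linarith
  refine ENNReal.mul_ne_top (by simp) (ENNReal.add_ne_top.2 ⟨ENNReal.mul_ne_top
    (jnConst_ne_top hD hs) (ENNReal.rpow_ne_top_of_nonneg hs0 hA),
    ENNReal.rpow_ne_top_of_nonneg hs0 (ENNReal.mul_ne_top hD (ENNReal.mul_ne_top (by simp) hA))⟩)

lemma lintegral_stop_le (hD : D ≠ ∞) {A : ℝ≥0∞} (hA0 : A ≠ 0) (hA : A ≠ ∞) {s : ℝ} (hs : 1 ≤ s)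
    {S : Set Ω} {a : ℂ} (hosc : ∫⁻ y in S, ‖f y - a‖ₑ ∂μ ≤ A * μ S) :
    ∫⁻ y in S, ((2 ^ s * A) ^ s + jnStop D A s / (2 ^ s * A) * ‖f y - a‖ₑ) ∂μ ≤
      jnConst D s * A ^ s * μ S := by
  have h2 : (2 : ℝ≥0∞) ^ s ≠ 0 := by simp
  rw [lintegral_add_left measurable_const, setLIntegral_const, lintegral_const_mul' _ _
    (ENNReal.div_ne_top (jnStop_ne_top hD hA hs) (mul_ne_zero h2 hA0))]
  calc _ ≤ (2 ^ s * A) ^ s * μ S + jnStop D A s / (2 ^ s * A) * (A * μ S) := by gcongr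
    _ = jnConst D s * A ^ s * μ S := by rw [← jnConst_step hA0 hA hs]; ring

/-- The stopping-time estimate, for an arbitrary constant `a` and a cell of level `N - d` that is not
yet stopped, by induction on `d`. The right-hand integrand majorises `|f_N - a|^s` on
cells that are never stopped by its first summand. On a stopped cell, where the mean of `|f - a|`
exceeds `2^s A`, the integral of its second summand is at least `jnStop` times the measure of the
cell. The form of the bound is additive over children, so no stopped cells need to be collected. -/
lemma IsGrid.stopping [Countable ι] (h : IsGrid μ D π) (hDt : D ≠ ∞)
    (hf : ∀ k x, IntegrableOn f (gridCell π k x) μ) {A : ℝ≥0∞} (hA0 : A ≠ 0) (hA : A ≠ ∞)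
    (hosc : ∀ k x, ∫⁻ y in gridCell π k x, ‖f y - cellAvg μ π f k x‖ₑ ∂μ
      ≤ A * μ (gridCell π k x))
    {s : ℝ} (hs : 1 ≤ s) (N d : ℕ) :
    ∀ (k : ℕ), k + d = N → ∀ (a : ℂ) (x : Ω),
      ∫⁻ y in gridCell π k x, ‖f y - a‖ₑ ∂μ ≤ 2 ^ s * A * μ (gridCell π k x) →
      ∫⁻ y in gridCell π k x, ‖cellAvg μ π f N y - a‖ₑ ^ s ∂μ ≤
        ∫⁻ y in gridCell π k x,
          ((2 ^ s * A) ^ s + jnStop D A s / (2 ^ s * A) * ‖f y - a‖ₑ) ∂μ := by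
  have hs0 : 0 ≤ s := by linarith
  have h2 : (2 : ℝ≥0∞) ^ s ≠ 0 := by simp
  have h2' : (2 : ℝ≥0∞) ^ s ≠ ∞ := by simp
  have hL0 : 2 ^ s * A ≠ 0 := mul_ne_zero h2 hA0
  have hL : 2 ^ s * A ≠ ∞ := ENNReal.mul_ne_top h2' hA
  have hclose : ∀ (k : ℕ) (x : Ω) (a : ℂ) (c : ℝ≥0∞),
      ∫⁻ y in gridCell π k x, ‖f y - a‖ₑ ∂μ ≤ c * μ (gridCell π k x) →
      ‖cellAvg μ π f k x - a‖ₑ ≤ c := by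
    intro k x a c hc
    have := (enorm_setAverage_sub_mul_le (h.pos k x) (h.fin k x) (hf k x) a).trans hc
    exact (ENNReal.mul_le_mul_iff_left (h.pos k x) (h.fin k x)).1 this
  induction d with
  | zero =>
    rintro k rfl a x hx
    refine setLIntegral_mono' (h.measurableSet _ _) fun y hy => ?_
    rw [add_zero, cellAvg_congr hy]
    exact (ENNReal.rpow_le_rpow (hclose k x a _ hx) hs0).trans le_self_add
  | succ d ih =>
    intro k hk a x hx
    refine setLIntegral_le_of_cells (h.meas (k + 1)) (S := gridCell π k x)
      (fun z hz => h.subset_of_mem (Nat.le_succ k) hz) fun z hz => ?_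
    change ∫⁻ y in gridCell π (k + 1) z, _ ∂μ ≤ ∫⁻ y in gridCell π (k + 1) z, _ ∂μ
    rcases le_or_gt (∫⁻ y in gridCell π (k + 1) z, ‖f y - a‖ₑ ∂μ)
      (2 ^ s * A * μ (gridCell π (k + 1) z)) with hzle | hzle
    · exact ih (k + 1) (by omega) a z hzle
    -- From here on the child `z` is stopped, while its parent is not.
    have hD : ‖cellAvg μ π f (k + 1) z - a‖ₑ ≤ D * (2 ^ s * A) := by
      refine hclose _ _ _ _ ?_
      calc ∫⁻ y in gridCell π (k + 1) z, ‖f y - a‖ₑ ∂μ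
          ≤ ∫⁻ y in gridCell π k x, ‖f y - a‖ₑ ∂μ :=
            lintegral_mono_set (h.subset_of_mem (Nat.le_succ k) hz)
        _ ≤ 2 ^ s * A * μ (gridCell π k z) := by rwa [gridCell_congr hz]
        _ ≤ 2 ^ s * A * (D * μ (gridCell π (k + 1) z)) := by gcongr; exact h.dbl k z
        _ = D * (2 ^ s * A) * μ (gridCell π (k + 1) z) := by ring
    have hrec : ∫⁻ y in gridCell π (k + 1) z,
        ‖cellAvg μ π f N y - cellAvg μ π f (k + 1) z‖ₑ ^ s ∂μ ≤
          jnConst D s * A ^ s * μ (gridCell π (k + 1) z) := by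
      have h1 : (1 : ℝ≥0∞) ≤ 2 ^ s := by
        simpa using ENNReal.rpow_le_rpow (z := s) (x := 1) (y := 2) (by norm_num) hs0
      refine (ih (k + 1) (by omega) (cellAvg μ π f (k + 1) z) z
        ((hosc (k + 1) z).trans ?_)).trans (lintegral_stop_le hDt hA0 hA hs (hosc (k + 1) z))
      gcongr
      exact le_mul_of_one_le_left' h1
    calc ∫⁻ y in gridCell π (k + 1) z, ‖cellAvg μ π f N y - a‖ₑ ^ s ∂μ
        ≤ ∫⁻ y in gridCell π (k + 1) z, 2 ^ (s - 1) *
            (‖cellAvg μ π f N y - cellAvg μ π f (k + 1) z‖ₑ ^ s + (D * (2 ^ s * A)) ^ s) ∂μ := by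
          refine lintegral_mono fun y => ?_
          have e : cellAvg μ π f N y - a = (cellAvg μ π f N y - cellAvg μ π f (k + 1) z) +
            (cellAvg μ π f (k + 1) z - a) := by ring
          rw [e]
          calc _ ≤ (‖cellAvg μ π f N y - cellAvg μ π f (k + 1) z‖ₑ +
                  ‖cellAvg μ π f (k + 1) z - a‖ₑ) ^ s := by
                gcongr; exact enorm_add_le _ _
            _ ≤ _ := ENNReal.rpow_add_le_mul_rpow_add_rpow _ _ hs
            _ ≤ _ := by gcongr
      _ ≤ jnStop D A s * μ (gridCell π (k + 1) z) := by
          rw [lintegral_const_mul' _ _ (by simp), lintegral_add_right _ measurable_const,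
            setLIntegral_const, jnStop, mul_assoc, add_mul]
          gcongr
      _ = jnStop D A s / (2 ^ s * A) * (2 ^ s * A * μ (gridCell π (k + 1) z)) := by
          rw [← mul_assoc, ENNReal.div_mul_cancel hL0 hL]
      _ ≤ jnStop D A s / (2 ^ s * A) * ∫⁻ y in gridCell π (k + 1) z, ‖f y - a‖ₑ ∂μ := by
          gcongr
      _ ≤ ∫⁻ y in gridCell π (k + 1) z, jnStop D A s / (2 ^ s * A) * ‖f y - a‖ₑ ∂μ :=
          lintegral_const_mul_le _ _
      _ ≤ _ := lintegral_mono fun y => le_add_self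

lemma IsGrid.lintegral_cellAvg_sub_rpow_le [Countable ι] (h : IsGrid μ D π) (hDt : D ≠ ∞)
    (hf : ∀ k x, IntegrableOn f (gridCell π k x) μ) {A : ℝ≥0∞} (hA0 : A ≠ 0) (hA : A ≠ ∞)
    (hosc : ∀ k x, ∫⁻ y in gridCell π k x, ‖f y - cellAvg μ π f k x‖ₑ ∂μ
      ≤ A * μ (gridCell π k x))
    {s : ℝ} (hs : 1 ≤ s) (N : ℕ) (x : Ω) :
    ∫⁻ y in gridCell π 0 x, ‖cellAvg μ π f N y - cellAvg μ π f 0 x‖ₑ ^ s ∂μ ≤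
      jnConst D s * A ^ s * μ (gridCell π 0 x) := by
  have h1 : (1 : ℝ≥0∞) ≤ 2 ^ s := by
    simpa using ENNReal.rpow_le_rpow (z := s) (x := 1) (y := 2) (by norm_num) (by linarith)
  refine (h.stopping hDt hf hA0 hA hosc hs N N 0 (zero_add N) _ x
    ((hosc 0 x).trans ?_)).trans (lintegral_stop_le hDt hA0 hA hs (hosc 0 x))
  gcongr
  exact le_mul_of_one_le_left' h1

lemma IsGrid.measurable_cellAvg [Countable ι] (h : IsGrid μ D π) (k : ℕ) :
    Measurable (cellAvg μ π f k) := by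
  let _ : MeasurableSpace ι := ⊤
  have hπ : Measurable (π k) := measurable_to_countable' (h.meas k)
  have : cellAvg μ π f k = (fun i => ⨍ y in π k ⁻¹' {i}, f y ∂μ) ∘ π k := rfl
  rw [this]
  exact (measurable_from_top).comp hπ

end grid

/-! ### Passage to the limit -/

section euclidean

open Filter Topology

variable {n : ℕ} {ι : Type*} {D : ℝ≥0∞} {π : ℕ → EuclideanSpace ℝ (Fin n) → ι}
  {f : EuclideanSpace ℝ (Fin n) → ℂ}

/-- `L¹`-convergence of the cell averages: on each cell `f` may be compared with the value at one
point of a continuous compactly supported approximation `g`, which is uniformly continuous. -/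
lemma IsGrid.tendsto_lintegral_cellAvg_sub [Countable ι] (h : IsGrid volume D π)
    (hf : ∀ k x, IntegrableOn f (gridCell π k x) volume)
    (hsmall : ∀ δ : ℝ≥0∞, 0 < δ → ∀ᶠ k in atTop, ∀ x, ∀ y ∈ gridCell π k x, edist y x < δ)
    (x : EuclideanSpace ℝ (Fin n)) :
    Tendsto (fun N => ∫⁻ y in gridCell π 0 x, ‖cellAvg volume π f N y - f y‖ₑ) atTop (𝓝 0) := by
  rw [ENNReal.tendsto_nhds_zero]
  intro ε hε
  set S := gridCell π 0 x with hS
  have hSm : MeasurableSet S := h.measurableSet 0 x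
  have hden : 2 + 2 * volume S ≠ ∞ := by
    simpa [ENNReal.mul_eq_top] using h.fin 0 x
  set η := ε / (2 + 2 * volume S)
  have hη : η ≠ 0 := (ENNReal.div_pos hε.ne' hden).ne'
  obtain ⟨g, hgc, hgf, hg, -⟩ :=
    ((hf 0 x).integrable_indicator hSm).exists_hasCompactSupport_lintegral_sub_le hη
  have hgf' : ∫⁻ y in S, ‖f y - g y‖ₑ ≤ η := by
    refine le_trans ?_ ((setLIntegral_le_lintegral S _).trans hgf)
    refine setLIntegral_mono' hSm fun y hy => ?_
    rw [Set.indicator_of_mem hy]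
  obtain ⟨δ, hδ, hδg⟩ := EMetric.uniformContinuous_iff.1
    (hgc.uniformContinuous_of_continuous hg) η (pos_iff_ne_zero.2 hη)
  filter_upwards [hsmall δ hδ] with N hN
  calc ∫⁻ y in S, ‖cellAvg volume π f N y - f y‖ₑ
      ≤ ∫⁻ y in S, 2 * (‖f y - g y‖ₑ + η) := by
        refine setLIntegral_le_of_cells (h.meas N)
          (fun z hz => h.subset_of_mem (Nat.zero_le N) hz) fun z hz => ?_
        change ∫⁻ y in gridCell π N z, _ ≤ ∫⁻ y in gridCell π N z, _
        calc ∫⁻ y in gridCell π N z, ‖cellAvg volume π f N y - f y‖ₑ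
            = ∫⁻ y in gridCell π N z, ‖f y - ⨍ w in gridCell π N z, f w‖ₑ := by
              refine setLIntegral_congr_fun (h.measurableSet N z) fun y hy => ?_
              change ‖cellAvg volume π f N y - f y‖ₑ = ‖f y - cellAvg volume π f N z‖ₑ
              rw [cellAvg_congr hy, ← enorm_neg, neg_sub]
          _ ≤ 2 * ∫⁻ y in gridCell π N z, ‖f y - g z‖ₑ :=
              lintegral_sub_setAverage_le (h.pos N z) (h.fin N z) (hf N z) _
          _ ≤ 2 * ∫⁻ y in gridCell π N z, (‖f y - g y‖ₑ + η) := by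
              gcongr 2 * ?_
              refine setLIntegral_mono' (h.measurableSet N z) fun y hy => ?_
              have e : f y - g z = (f y - g y) + (g y - g z) := by ring
              rw [e]
              refine (enorm_add_le _ _).trans ?_
              gcongr
              rw [← edist_eq_enorm_sub]
              exact (hδg (hN z y hy)).le
          _ = ∫⁻ y in gridCell π N z, 2 * (‖f y - g y‖ₑ + η) :=
              (lintegral_const_mul' _ _ (by simp)).symm
    _ ≤ 2 * (η + η * volume S) := by
        rw [lintegral_const_mul' _ _ (by simp), lintegral_add_right _ measurable_const,
          setLIntegral_const]
        gcongr
    _ = (2 + 2 * volume S) * η := by ring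
    _ ≤ ε := ENNReal.mul_div_le

/-- The dyadic John–Nirenberg inequality in `L^s` form. -/
lemma IsGrid.lintegral_sub_rpow_le [Countable ι] (h : IsGrid volume D π) (hDt : D ≠ ∞)
    (hf : ∀ k x, IntegrableOn f (gridCell π k x) volume)
    (hsmall : ∀ δ : ℝ≥0∞, 0 < δ → ∀ᶠ k in atTop, ∀ x, ∀ y ∈ gridCell π k x, edist y x < δ)
    {A : ℝ≥0∞} (hA0 : A ≠ 0) (hA : A ≠ ∞)
    (hosc : ∀ k x, ∫⁻ y in gridCell π k x, ‖f y - cellAvg volume π f k x‖ₑ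
      ≤ A * volume (gridCell π k x))
    {s : ℝ} (hs : 1 ≤ s) (x : EuclideanSpace ℝ (Fin n)) :
    ∫⁻ y in gridCell π 0 x, ‖f y - cellAvg volume π f 0 x‖ₑ ^ s ≤
      jnConst D s * A ^ s * volume (gridCell π 0 x) := by
  have hconv : TendstoInMeasure (volume.restrict (gridCell π 0 x))
      (fun N => cellAvg volume π f N) atTop f := by
    refine tendstoInMeasure_of_tendsto_eLpNorm one_ne_zero
      (fun N => (h.measurable_cellAvg N).aestronglyMeasurable) (hf 0 x).1 ?_
    simpa [eLpNorm_one_eq_lintegral_enorm] using h.tendsto_lintegral_cellAvg_sub hf hsmall x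
  obtain ⟨ns, -, hns⟩ := hconv.exists_seq_tendsto_ae
  calc ∫⁻ y in gridCell π 0 x, ‖f y - cellAvg volume π f 0 x‖ₑ ^ s
      = ∫⁻ y in gridCell π 0 x, liminf (fun i =>
          ‖cellAvg volume π f (ns i) y - cellAvg volume π f 0 x‖ₑ ^ s) atTop := by
        refine lintegral_congr_ae ?_
        filter_upwards [hns] with y hy
        refine (Tendsto.liminf_eq ?_).symm
        exact ((ENNReal.continuous_rpow_const (y := s)).tendsto _).comp
          ((hy.sub_const _).enorm)
    _ ≤ liminf (fun i => ∫⁻ y in gridCell π 0 x,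
          ‖cellAvg volume π f (ns i) y - cellAvg volume π f 0 x‖ₑ ^ s) atTop := by
        refine lintegral_liminf_le' fun i => ?_
        exact (((h.measurable_cellAvg (ns i)).sub_const _).enorm.pow_const s).aemeasurable
    _ ≤ _ := by
        refine liminf_le_of_le (by isBoundedDefault) fun b hb => ?_
        obtain ⟨i, hi⟩ := hb.exists
        exact hi.trans (h.lintegral_cellAvg_sub_rpow_le hDt hf hA0 hA hosc hs (ns i) x)

end euclidean

/-! ### The anisotropic grid of a `β`-cube -/

section betaGrid

open Filter Topology

variable {n : ℕ} {β : Fin n → ℝ}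

/-- The number of times the `i`-th side has been halved at level `k`. Rounding `k β i` down keeps
the side lengths within a factor `2` of those of a `β`-cube of sidelength `2^{-k} ℓ(Q)`. -/
def gridExp (β : Fin n → ℝ) (k : ℕ) (i : Fin n) : ℕ := ⌊(k : ℝ) * β i⌋₊

/-- The length of the `i`-th side of the cells of level `k`. -/
def gridSide (Q : BetaCube n β) (k : ℕ) (i : Fin n) : ℝ := Q.l ^ β i / 2 ^ gridExp β k i

/-- The integer coordinates of the level-`k` cell containing `x`, counted from the lower corner
of `Q`. -/
def betaGrid (Q : BetaCube n β) (k : ℕ) (x : EuclideanSpace ℝ (Fin n)) : Fin n → ℤ :=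
  fun i => ⌊(x i - (Q.c i - Q.l ^ β i / 2)) / gridSide Q k i⌋

lemma side_pos (Q : BetaCube n β) (i : Fin n) : 0 < Q.l ^ β i := Real.rpow_pos_of_pos Q.l_pos _

lemma gridSide_pos (Q : BetaCube n β) (k : ℕ) (i : Fin n) : 0 < gridSide Q k i :=
  div_pos (side_pos Q i) (by positivity)

lemma volume_toLp_preimage (S : Set (Fin n → ℝ)) (hS : MeasurableSet S) :
    volume {x : EuclideanSpace ℝ (Fin n) | (fun i => x i) ∈ S} = volume S :=
  (EuclideanSpace.volume_preserving_symm_measurableEquiv_toLp (Fin n)).measure_preimage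
    hS.nullMeasurableSet

lemma measurableSet_toLp_preimage (S : Set (Fin n → ℝ)) (hS : MeasurableSet S) :
    MeasurableSet {x : EuclideanSpace ℝ (Fin n) | (fun i => x i) ∈ S} :=
  (EuclideanSpace.volume_preserving_symm_measurableEquiv_toLp (Fin n)).measurable hS

lemma betaGrid_preimage (Q : BetaCube n β) (k : ℕ) (j : Fin n → ℤ) :
    betaGrid Q k ⁻¹' {j} = {x | (fun i => x i) ∈ Set.univ.pi fun i =>
      Set.Ico (Q.c i - Q.l ^ β i / 2 + j i * gridSide Q k i)
        (Q.c i - Q.l ^ β i / 2 + (j i + 1) * gridSide Q k i)} := by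
  ext x
  simp only [Set.mem_preimage, Set.mem_singleton_iff, funext_iff, betaGrid, Int.floor_eq_iff,
    Set.mem_ofPred_eq, Set.mem_pi, Set.mem_univ, true_imp_iff, Set.mem_Ico]
  refine forall_congr' fun i => ?_
  rw [le_div_iff₀ (gridSide_pos Q k i), div_lt_iff₀ (gridSide_pos Q k i)]
  constructor <;> rintro ⟨h1, h2⟩ <;> constructor <;> linarith

lemma volume_betaGrid (Q : BetaCube n β) (k : ℕ) (x : EuclideanSpace ℝ (Fin n)) :
    volume (gridCell (betaGrid Q) k x) = ∏ i, ENNReal.ofReal (gridSide Q k i) := by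
  rw [gridCell, betaGrid_preimage, volume_toLp_preimage _
    (MeasurableSet.univ_pi fun i => measurableSet_Ico), Real.volume_pi_Ico]
  congr! 2 with i
  ring

lemma abs_sub_lt_of_mem_gridCell (Q : BetaCube n β) {k : ℕ} {x y : EuclideanSpace ℝ (Fin n)}
    (hy : y ∈ gridCell (betaGrid Q) k x) (i : Fin n) : |y i - x i| < gridSide Q k i := by
  have hx : x ∈ gridCell (betaGrid Q) k x := mem_gridCell_self k x
  rw [gridCell, betaGrid_preimage] at hx hy
  have h1 := hx i (Set.mem_univ i)
  have h2 := hy i (Set.mem_univ i)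
  rw [Set.mem_Ico] at h1 h2
  rw [abs_lt]
  constructor <;> linarith [h1.1, h1.2, h2.1, h2.2]

lemma gridExp_succ_le (k : ℕ) (i : Fin n) :
    gridExp β (k + 1) i ≤ gridExp β k i + ⌈β i⌉₊ := by
  rcases le_or_gt 0 (β i) with h | h
  · rw [gridExp, gridExp, ← Nat.floor_add_natCast (by positivity)]
    refine Nat.floor_mono ?_
    push_cast
    linarith [Nat.le_ceil (β i)]
  · rw [gridExp, Nat.floor_of_nonpos]
    · simp
    · exact mul_nonpos_of_nonneg_of_nonpos (by positivity) h.le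

lemma gridExp_le_succ (hβ : ∀ i, 0 < β i) (k : ℕ) (i : Fin n) :
    gridExp β k i ≤ gridExp β (k + 1) i := by
  refine Nat.floor_mono ?_
  push_cast
  linarith [hβ i]

/-- The doubling constant of the grid. -/
def gridDbl (β : Fin n → ℝ) : ℝ≥0∞ := ∏ i, ENNReal.ofReal (2 ^ ⌈β i⌉₊)

lemma isGrid_betaGrid (hβ : ∀ i, 0 < β i) (Q : BetaCube n β) :
    IsGrid volume (gridDbl β) (betaGrid Q) where
  meas k j := by
    rw [betaGrid_preimage]
    exact measurableSet_toLp_preimage _ (MeasurableSet.univ_pi fun i => measurableSet_Ico)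
  nest k x y hxy := by
    -- the index at level `k` is an integer quotient of the index at level `k + 1`
    have key : ∀ (z : EuclideanSpace ℝ (Fin n)) i, betaGrid Q k z i =
        betaGrid Q (k + 1) z i / ((2 ^ (gridExp β (k + 1) i - gridExp β k i) : ℕ) : ℤ) := by
      intro z i
      rw [betaGrid, betaGrid, ← Int.floor_div_natCast, div_div]
      congr 2
      have hpow : (2 : ℝ) ^ gridExp β (k + 1) i =
          2 ^ gridExp β k i * 2 ^ (gridExp β (k + 1) i - gridExp β k i) := by
        rw [← pow_add, Nat.add_sub_cancel' (gridExp_le_succ hβ k i)]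
      rw [gridSide, gridSide, hpow]
      push_cast
      field_simp
    ext i
    rw [key, key, hxy]
  pos k x := by
    rw [volume_betaGrid]
    exact Finset.prod_ne_zero_iff.2 fun i _ => by simpa using gridSide_pos Q k i
  fin k x := by
    rw [volume_betaGrid]
    exact ENNReal.prod_ne_top fun i _ => ENNReal.ofReal_ne_top
  dbl k x := by
    rw [volume_betaGrid, volume_betaGrid, gridDbl, ← Finset.prod_mul_distrib]
    refine Finset.prod_le_prod' fun i _ => ?_
    rw [← ENNReal.ofReal_mul (by positivity)]
    refine ENNReal.ofReal_le_ofReal ?_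
    rw [gridSide, gridSide, mul_div_assoc', div_le_div_iff₀ (by positivity) (by positivity)]
    have : (2 : ℝ) ^ gridExp β (k + 1) i ≤ 2 ^ (gridExp β k i + ⌈β i⌉₊) :=
      pow_le_pow_right₀ (by norm_num) (gridExp_succ_le k i)
    rw [pow_add] at this
    have := mul_le_mul_of_nonneg_left this (side_pos Q i).le
    linarith

lemma gridDbl_ne_top : gridDbl β ≠ ∞ := ENNReal.prod_ne_top fun i _ => ENNReal.ofReal_ne_top

lemma tendsto_gridSide (hβ : ∀ i, 0 < β i) (Q : BetaCube n β) (i : Fin n) :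
    Tendsto (fun k => gridSide Q k i) atTop (𝓝 0) := by
  refine Tendsto.const_div_atTop ?_ _
  refine (tendsto_pow_atTop_atTop_of_one_lt (by norm_num : (1 : ℝ) < 2)).comp ?_
  exact tendsto_nat_floor_atTop.comp
    (tendsto_natCast_atTop_atTop.atTop_mul_const (hβ i))

lemma betaGrid_small (hβ : ∀ i, 0 < β i) (Q : BetaCube n β) (δ : ℝ≥0∞) (hδ : 0 < δ) :
    ∀ᶠ k in atTop, ∀ x, ∀ y ∈ gridCell (betaGrid Q) k x, edist y x < δ := by
  obtain ⟨δ', hδ', h⟩ := EMetric.uniformContinuous_iff.1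
    (PiLp.uniformContinuous_toLp 2 (fun _ : Fin n => ℝ)) δ hδ
  have : ∀ᶠ k in atTop, ∀ i, ENNReal.ofReal (gridSide Q k i) < δ' := by
    rw [eventually_all]
    intro i
    have := ENNReal.tendsto_ofReal (tendsto_gridSide hβ Q i)
    rw [ENNReal.ofReal_zero] at this
    exact this.eventually_lt_const hδ'
  filter_upwards [this] with k hk x y hy
  have := @h (fun i => y i) (fun i => x i) (by
    rw [edist_pi_def]
    refine (Finset.sup_lt_iff hδ').2 fun i _ => ?_
    rw [edist_dist, Real.dist_eq]
    exact (ENNReal.ofReal_le_ofReal (abs_sub_lt_of_mem_gridCell Q hy i).le).trans_lt (hk i))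
  exact this

lemma BetaCube.set_eq (Q : BetaCube n β) :
    Q.set = {x | (fun i => x i) ∈ Set.Icc (fun i => Q.c i - Q.l ^ β i / 2)
      (fun i => Q.c i + Q.l ^ β i / 2)} := by
  ext x
  simp only [BetaCube.set, Set.mem_ofPred_eq, Set.mem_Icc, Pi.le_def, abs_le, ← forall_and]
  refine forall_congr' fun i => ?_
  constructor <;> rintro ⟨h1, h2⟩ <;> constructor <;> linarith

lemma BetaCube.volume_set_eq_prod (Q : BetaCube n β) :
    volume Q.set = ∏ i, ENNReal.ofReal (Q.l ^ β i) := by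
  rw [BetaCube.set_eq, volume_toLp_preimage _ measurableSet_Icc, Real.volume_Icc_pi]
  congr! 2 with i
  ring

lemma BetaCube.prod_eq (Q : BetaCube n β) :
    ∏ i, ENNReal.ofReal (Q.l ^ β i) = ENNReal.ofReal (Q.l ^ ∑ i, β i) := by
  rw [← ENNReal.ofReal_prod_of_nonneg fun i _ => (side_pos Q i).le,
    Real.rpow_sum_of_pos Q.l_pos]

lemma BetaCube.volume_set (Q : BetaCube n β) :
    volume Q.set = ENNReal.ofReal (Q.l ^ ∑ i, β i) := by
  rw [BetaCube.volume_set_eq_prod, BetaCube.prod_eq]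

lemma BetaCube.isCompact_set (Q : BetaCube n β) : IsCompact Q.set := by
  rw [BetaCube.set_eq]
  exact (PiLp.homeomorph 2 (fun _ : Fin n => ℝ)).isCompact_preimage.2 isCompact_Icc

/-- A factor `κ` with `κ ^ β i ≥ 4` for all `i`. One factor `2` makes up for the rounding in
`gridExp`, the other one for centring the cube at an arbitrary point of the cell. -/
def dil (β : Fin n → ℝ) : ℝ := 4 ^ ∑ i, (β i)⁻¹

lemma one_le_dil (hβ : ∀ i, 0 < β i) : 1 ≤ dil β :=
  Real.one_le_rpow (by norm_num) (Finset.sum_nonneg fun i _ => (inv_pos.2 (hβ i)).le)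

lemma four_le_dil_rpow (hβ : ∀ i, 0 < β i) (i : Fin n) : 4 ≤ dil β ^ β i := by
  rw [dil, ← Real.rpow_mul (by norm_num)]
  have h : 1 ≤ (∑ i, (β i)⁻¹) * β i := by
    have := Finset.single_le_sum (f := fun i => (β i)⁻¹)
      (fun i _ => (inv_pos.2 (hβ i)).le) (Finset.mem_univ i)
    calc 1 = (β i)⁻¹ * β i := (inv_mul_cancel₀ (hβ i).ne').symm
      _ ≤ _ := mul_le_mul_of_nonneg_right this (hβ i).le
  calc (4 : ℝ) = 4 ^ (1 : ℝ) := (Real.rpow_one 4).symm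
    _ ≤ _ := Real.rpow_le_rpow_of_exponent_le (by norm_num) h

/-- The `β`-cube centred at `x`, of sidelength comparable to `2^{-k} ℓ(Q)`, that serves as a hull
of the level-`k` cell around `x`. -/
def hull (Q : BetaCube n β) (hβ : ∀ i, 0 < β i) (k : ℕ) (x : EuclideanSpace ℝ (Fin n)) :
    BetaCube n β :=
  ⟨x, dil β * (Q.l * 2 ^ (-(k : ℝ))), by
    have := one_le_dil hβ
    have := Q.l_pos
    positivity⟩

lemma hull_side (Q : BetaCube n β) (hβ : ∀ i, 0 < β i) (k : ℕ) (x : EuclideanSpace ℝ (Fin n))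
    (i : Fin n) : (hull Q hβ k x).l ^ β i =
      dil β ^ β i * (Q.l ^ β i / 2 ^ ((k : ℝ) * β i)) := by
  have := one_le_dil hβ
  have := Q.l_pos
  rw [hull, Real.mul_rpow (by positivity) (by positivity), Real.mul_rpow (by positivity)
    (by positivity), ← Real.rpow_mul (by norm_num), neg_mul, Real.rpow_neg (by norm_num),
    div_eq_mul_inv]

lemma gridCell_subset_hull (Q : BetaCube n β) (hβ : ∀ i, 0 < β i) (k : ℕ)
    (x : EuclideanSpace ℝ (Fin n)) : gridCell (betaGrid Q) k x ⊆ (hull Q hβ k x).set := by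
  intro y hy i
  refine (abs_sub_lt_of_mem_gridCell Q hy i).le.trans ?_
  rw [hull_side, gridSide]
  have hpow : (2 : ℝ) ^ ((k : ℝ) * β i) ≤ 2 * 2 ^ gridExp β k i := by
    have := (Nat.lt_floor_add_one ((k : ℝ) * β i)).le
    have := Real.rpow_le_rpow_of_exponent_le (x := 2) (by norm_num) this
    rw [Real.rpow_add (by norm_num), Real.rpow_one, Real.rpow_natCast] at this
    rw [gridExp]; linarith
  have hL := side_pos Q i
  have h4 := four_le_dil_rpow hβ i
  calc Q.l ^ β i / 2 ^ gridExp β k i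
      ≤ 2 * (Q.l ^ β i / 2 ^ ((k : ℝ) * β i)) := by
        rw [mul_div_assoc', div_le_div_iff₀ (by positivity) (by positivity)]
        nlinarith
    _ = 4 * (Q.l ^ β i / 2 ^ ((k : ℝ) * β i)) / 2 := by ring
    _ ≤ _ := by gcongr

/-- The bound for the volume of a hull relative to its cell. -/
def hullRatio (β : Fin n → ℝ) : ℝ≥0∞ := ENNReal.ofReal (dil β ^ ∑ i, β i)

lemma volume_hull_le (Q : BetaCube n β) (hβ : ∀ i, 0 < β i) (k : ℕ)
    (x : EuclideanSpace ℝ (Fin n)) :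
    volume (hull Q hβ k x).set ≤ hullRatio β * volume (gridCell (betaGrid Q) k x) := by
  have hd := one_le_dil hβ
  rw [hullRatio, Real.rpow_sum_of_pos (by linarith), ENNReal.ofReal_prod_of_nonneg
    (fun i _ => by positivity), BetaCube.volume_set_eq_prod, volume_betaGrid,
    ← Finset.prod_mul_distrib]
  refine Finset.prod_le_prod' fun i _ => ?_
  rw [← ENNReal.ofReal_mul (by positivity), hull_side, gridSide]
  refine ENNReal.ofReal_le_ofReal ?_
  have hL := side_pos Q i
  have hpow : (2 : ℝ) ^ gridExp β k i ≤ 2 ^ ((k : ℝ) * β i) := by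
    rw [← Real.rpow_natCast]
    exact Real.rpow_le_rpow_of_exponent_le (by norm_num)
      (Nat.floor_le (mul_nonneg (by positivity) (hβ i).le))
  gcongr

lemma volume_hull_le' (Q : BetaCube n β) (hβ : ∀ i, 0 < β i) (k : ℕ)
    (x : EuclideanSpace ℝ (Fin n)) :
    volume (hull Q hβ k x).set ≤ hullRatio β * volume Q.set := by
  refine (volume_hull_le Q hβ k x).trans ?_
  gcongr hullRatio β * ?_
  rw [volume_betaGrid, BetaCube.volume_set_eq_prod]
  refine Finset.prod_le_prod' fun i _ => ENNReal.ofReal_le_ofReal ?_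
  exact div_le_self (side_pos Q i).le (one_le_pow₀ (by norm_num))

/-- The half-open root cell and the closed cube differ by a null set. -/
lemma gridCell_zero_ae_eq (Q : BetaCube n β) :
    gridCell (betaGrid Q) 0 Q.c =ᵐ[volume] Q.set := by
  have h0 : ∀ i, gridSide Q 0 i = Q.l ^ β i := fun i => by simp [gridSide, gridExp]
  have hidx : betaGrid Q 0 Q.c = 0 := by
    ext i
    have hL := side_pos Q i
    rw [betaGrid, h0, Pi.zero_apply, Int.floor_eq_zero_iff]
    have : (Q.c i - (Q.c i - Q.l ^ β i / 2)) / Q.l ^ β i = 1 / 2 := by field_simp; ring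
    rw [this]
    constructor <;> norm_num
  have hvol : volume Q.set = volume (gridCell (betaGrid Q) 0 Q.c) := by
    rw [volume_betaGrid, BetaCube.volume_set_eq_prod]
    simp [h0]
  refine ae_eq_of_subset_of_measure_ge ?_ hvol.le ?_ Q.isCompact_set.measure_ne_top
  · intro y hy
    rw [gridCell, hidx, betaGrid_preimage] at hy
    rw [BetaCube.set_eq]
    constructor
    · intro i
      have := (hy i (Set.mem_univ i)).1
      simp only [h0] at this
      simpa using this
    · intro i
      have := (hy i (Set.mem_univ i)).2
      simp only [h0, Pi.zero_apply, Int.cast_zero] at this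
      change y i ≤ _
      linarith
  · rw [gridCell, betaGrid_preimage]
    exact (measurableSet_toLp_preimage _
      (MeasurableSet.univ_pi fun i => measurableSet_Ico)).nullMeasurableSet

end betaGrid

/-! ### Comparison of the oscillations -/

section comparison

variable {n : ℕ} {β : Fin n → ℝ}

lemma eOsc_one_le (α : ℝ) {s : ℝ} (hs : 1 ≤ s) {b : EuclideanSpace ℝ (Fin n) → ℂ}
    (hb : LocallyIntegrable b volume) (Q : BetaCube n β) :
    eOsc β α 1 b Q ≤ eOsc β α s b Q := by
  have hV0 : ENNReal.ofReal (Q.l ^ ∑ i, β i) ≠ 0 := by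
    simpa using Real.rpow_pos_of_pos Q.l_pos _
  set ν : Measure (EuclideanSpace ℝ (Fin n)) :=
    (ENNReal.ofReal (Q.l ^ ∑ i, β i))⁻¹ • volume.restrict Q.set with hν
  have hprob : IsProbabilityMeasure ν := by
    constructor
    rw [hν, Measure.smul_apply, Measure.restrict_apply_univ, Q.volume_set, smul_eq_mul,
      ENNReal.inv_mul_cancel hV0 ENNReal.ofReal_ne_top]
  have hmeas : AEStronglyMeasurable (fun x => b x - cubeAvg Q b) ν :=
    ((hb.aestronglyMeasurable.mono_measure Measure.restrict_le_self).smul_measure _).sub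
      aestronglyMeasurable_const
  have key := eLpNorm'_le_eLpNorm'_of_exponent_le one_pos hs ν hmeas
  rw [eLpNorm'_eq_lintegral_enorm, eLpNorm'_eq_lintegral_enorm, hν, lintegral_smul_measure,
    lintegral_smul_measure] at key
  unfold eOsc
  gcongr
  exact key

lemma lintegral_osc_le {α : ℝ} {b : EuclideanSpace ℝ (Fin n) → ℂ} {Q : BetaCube n β} {M : ℝ≥0∞}
    (h : eOsc β α 1 b Q ≤ M) :
    ∫⁻ x in Q.set, ‖b x - cubeAvg Q b‖ₑ ≤
      M * volume Q.set ^ (α / ∑ i, β i) * volume Q.set := by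
  have hV0 : volume Q.set ≠ 0 := by
    rw [Q.volume_set]; simpa using Real.rpow_pos_of_pos Q.l_pos _
  have hV : volume Q.set ≠ ∞ := Q.isCompact_set.measure_ne_top
  unfold eOsc at h
  rw [← Q.volume_set] at h
  simp only [ENNReal.rpow_one, div_one] at h
  set V := volume Q.set
  have e : ∫⁻ x in Q.set, ‖b x - cubeAvg Q b‖ₑ =
      (V ^ (-(α / ∑ i, β i)) * (V⁻¹ * ∫⁻ x in Q.set, ‖b x - cubeAvg Q b‖ₑ)) *
        V ^ (α / ∑ i, β i) * V := by
    have h1 : V ^ (-(α / ∑ i, β i)) * V ^ (α / ∑ i, β i) = 1 := by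
      rw [← ENNReal.rpow_add _ _ hV0 hV, neg_add_cancel, ENNReal.rpow_zero]
    have h2 := ENNReal.inv_mul_cancel hV0 hV
    set I := ∫⁻ x in Q.set, ‖b x - cubeAvg Q b‖ₑ
    calc I = (V ^ (-(α / ∑ i, β i)) * V ^ (α / ∑ i, β i)) * (V⁻¹ * V) * I := by
          rw [h1, h2, one_mul, one_mul]
      _ = _ := by ring
  rw [e]
  gcongr
  exact h

/-- The constant in the upper bound. -/
def upperConst (β : Fin n → ℝ) (α s : ℝ) : ℝ≥0∞ :=
  jnConst (gridDbl β) s ^ (1 / s) * (2 * hullRatio β * hullRatio β ^ (α / ∑ i, β i))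

lemma upperConst_ne_top (hβ : ∀ i, 0 < β i) {α : ℝ} (hα : 0 ≤ α) {s : ℝ} (hs : 1 ≤ s) :
    upperConst β α s ≠ ∞ := by
  have hγ : 0 ≤ α / ∑ i, β i := div_nonneg hα (Finset.sum_nonneg fun i _ => (hβ i).le)
  refine ENNReal.mul_ne_top (ENNReal.rpow_ne_top_of_nonneg (by positivity)
    (jnConst_ne_top gridDbl_ne_top hs)) (ENNReal.mul_ne_top (ENNReal.mul_ne_top (by simp)
      ENNReal.ofReal_ne_top) (ENNReal.rpow_ne_top_of_nonneg hγ ENNReal.ofReal_ne_top))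

/-- The upper bound, given a positive finite bound `M` for all `L¹`-oscillations. -/
lemma eOsc_le_of_forall_le (hβ : ∀ i, 0 < β i) {α : ℝ} (hα : 0 ≤ α) {s : ℝ} (hs : 1 ≤ s)
    {b : EuclideanSpace ℝ (Fin n) → ℂ} (hb : LocallyIntegrable b volume) {M : ℝ≥0∞}
    (hM0 : M ≠ 0) (hM : M ≠ ∞) (hosc : ∀ Q : BetaCube n β, eOsc β α 1 b Q ≤ M)
    (Q : BetaCube n β) : eOsc β α s b Q ≤ upperConst β α s * M := by
  have hs0 : 0 < s := by linarith
  have hγ : 0 ≤ α / ∑ i, β i := div_nonneg hα (Finset.sum_nonneg fun i _ => (hβ i).le)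
  have hV0 : volume Q.set ≠ 0 := by
    rw [Q.volume_set]; simpa using Real.rpow_pos_of_pos Q.l_pos _
  have hV : volume Q.set ≠ ∞ := Q.isCompact_set.measure_ne_top
  have hW0 : hullRatio β ≠ 0 := by
    have := one_le_dil hβ
    rw [hullRatio, ne_eq, ENNReal.ofReal_eq_zero, not_le]
    positivity
  have hW : hullRatio β ≠ ∞ := ENNReal.ofReal_ne_top
  set γ := α / ∑ i, β i with hγd
  have hgrid := isGrid_betaGrid hβ Q
  have hf : ∀ k x, IntegrableOn b (gridCell (betaGrid Q) k x) volume := fun k x =>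
    (hb.integrableOn_isCompact (hull Q hβ k x).isCompact_set).mono_set
      (gridCell_subset_hull Q hβ k x)
  set A := 2 * (M * (hullRatio β * volume Q.set) ^ γ * hullRatio β) with hAd
  have hWV0 : hullRatio β * volume Q.set ≠ 0 := mul_ne_zero hW0 hV0
  have hWV : hullRatio β * volume Q.set ≠ ∞ := ENNReal.mul_ne_top hW hV
  have hA0 : A ≠ 0 := by
    refine mul_ne_zero two_ne_zero (mul_ne_zero (mul_ne_zero hM0 ?_) hW0)
    simp [ENNReal.rpow_eq_zero_iff, hWV0, hWV]
  have hA : A ≠ ∞ := ENNReal.mul_ne_top (by simp) (ENNReal.mul_ne_top (ENNReal.mul_ne_top hM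
    (ENNReal.rpow_ne_top_of_nonneg hγ hWV)) hW)
  have hcell : ∀ k x, ∫⁻ y in gridCell (betaGrid Q) k x,
      ‖b y - cellAvg volume (betaGrid Q) b k x‖ₑ ≤ A * volume (gridCell (betaGrid Q) k x) := by
    intro k x
    calc ∫⁻ y in gridCell (betaGrid Q) k x, ‖b y - cellAvg volume (betaGrid Q) b k x‖ₑ
        ≤ 2 * ∫⁻ y in gridCell (betaGrid Q) k x, ‖b y - cubeAvg (hull Q hβ k x) b‖ₑ :=
          lintegral_sub_setAverage_le (hgrid.pos k x) (hgrid.fin k x) (hf k x) _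
      _ ≤ 2 * ∫⁻ y in (hull Q hβ k x).set, ‖b y - cubeAvg (hull Q hβ k x) b‖ₑ := by
          gcongr 2 * ?_
          exact lintegral_mono_set (gridCell_subset_hull Q hβ k x)
      _ ≤ 2 * (M * volume (hull Q hβ k x).set ^ γ * volume (hull Q hβ k x).set) := by
          gcongr 2 * ?_
          exact lintegral_osc_le (hosc _)
      _ ≤ 2 * (M * (hullRatio β * volume Q.set) ^ γ *
            (hullRatio β * volume (gridCell (betaGrid Q) k x))) := by
          gcongr
          · exact volume_hull_le' Q hβ k x
          · exact volume_hull_le Q hβ k x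
      _ = _ := by rw [hAd]; ring
  have main := hgrid.lintegral_sub_rpow_le gridDbl_ne_top hf (betaGrid_small hβ Q) hA0 hA hcell
    hs Q.c
  have hae := gridCell_zero_ae_eq Q
  have havg : cellAvg volume (betaGrid Q) b 0 Q.c = cubeAvg Q b := setAverage_congr hae
  rw [setLIntegral_congr hae, measure_congr hae, havg] at main
  unfold eOsc
  rw [← Q.volume_set, ← hγd]
  calc volume Q.set ^ (-γ) * ((volume Q.set)⁻¹ *
        ∫⁻ x in Q.set, ‖b x - cubeAvg Q b‖ₑ ^ s) ^ (1 / s)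
      ≤ volume Q.set ^ (-γ) * ((volume Q.set)⁻¹ *
        (jnConst (gridDbl β) s * A ^ s * volume Q.set)) ^ (1 / s) := by gcongr
    _ = volume Q.set ^ (-γ) * (jnConst (gridDbl β) s ^ (1 / s) * A) := by
        rw [mul_comm _ (volume Q.set), ← mul_assoc (volume Q.set)⁻¹,
          ENNReal.inv_mul_cancel hV0 hV, one_mul, ENNReal.mul_rpow_of_nonneg _ _ (by positivity),
          ← ENNReal.rpow_mul, mul_one_div_cancel hs0.ne', ENNReal.rpow_one]
    _ = (volume Q.set ^ (-γ) * volume Q.set ^ γ) * (upperConst β α s * M) := by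
        rw [hAd, ENNReal.mul_rpow_of_nonneg _ _ hγ, upperConst]; ring
    _ = upperConst β α s * M := by
        rw [← ENNReal.rpow_add _ _ hV0 hV, neg_add_cancel, ENNReal.rpow_zero, one_mul]

end comparison

/-- **John–Nirenberg inequality for anisotropic fractional BMO.** For `α ≥ 0` and
`1 ≤ s < ∞`, the `L^s`-based `BMO^{β,α}` seminorm is comparable (in `[0,∞]`) to
the `L^1`-based one, with constants depending only on `n, β, α, s`. -/
theorem john_nirenberg_betaBMO
    (n : ℕ) (hn : 1 ≤ n) (β : Fin n → ℝ) (hβ : ∀ i, 0 < β i)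
    (α : ℝ) (hα : 0 ≤ α) (s : ℝ) (hs : 1 ≤ s) :
    ∃ C : ℝ, 1 ≤ C ∧
      ∀ b : EuclideanSpace ℝ (Fin n) → ℂ, LocallyIntegrable b volume →
        (ENNReal.ofReal C)⁻¹ * (⨆ Q : BetaCube n β, eOsc β α 1 b Q) ≤
            (⨆ Q : BetaCube n β, eOsc β α s b Q) ∧
          (⨆ Q : BetaCube n β, eOsc β α s b Q) ≤
            ENNReal.ofReal C * ⨆ Q : BetaCube n β, eOsc β α 1 b Q := by
  refine ⟨max 1 (upperConst β α s).toReal, le_max_left _ _, fun b hb => ⟨?_, ?_⟩⟩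
  · refine (mul_le_of_le_one_left' ?_).trans (iSup_mono fun Q => eOsc_one_le α hs hb Q)
    rw [ENNReal.inv_le_one, ENNReal.one_le_ofReal]
    exact le_max_left _ _
  · set K := ENNReal.ofReal (max 1 (upperConst β α s).toReal) with hK
    have hK0 : K ≠ 0 := by simp [hK]
    have hKle : upperConst β α s ≤ K := by
      rw [← ENNReal.ofReal_toReal (upperConst_ne_top hβ hα hs)]
      exact ENNReal.ofReal_le_ofReal (le_max_right _ _)
    refine iSup_le fun Q => ?_
    rw [mul_comm, ← ENNReal.div_le_iff hK0 ENNReal.ofReal_ne_top]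
    -- A strict upper bound `M` of the supremum is used, since the stopping argument needs `M ≠ 0`.
    refine le_of_forall_gt_imp_ge_of_dense fun M hM => ?_
    rcases eq_or_ne M ∞ with rfl | hMt
    · exact le_top
    rw [ENNReal.div_le_iff hK0 ENNReal.ofReal_ne_top, mul_comm]
    refine (eOsc_le_of_forall_le hβ hα hs hb (ne_bot_of_gt hM) hMt
      (fun Q' => (le_iSup _ Q').trans hM.le) Q).trans ?_
    gcongr

end
end

section
/- Let β=(1,2) and γ∈{γ_adj,γ_opp}, where γ_adj(t)=(t,t²) and γ_opp(t)=(t,sign(t)·t²). There exists A*≥1 such that for every A_1≥A* the following holds (with A_2=10A_1 and the sets Q̃, V_1, P, P̃, W_1 as defined): for every (1,2)-cube Q=I×J and every z∈P, ⋃_{y∈φ(z,−,W_1)} φ(y,−,Q) = Q. -/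
/-!
Fix `w ∈ Q` and `z ∈ P`. The point `w` lies on the segment through `y ∈ φ(z, −, W₁)` as soon as
`y = w + γ(t) = z − γ(s)` with `t ∈ I_{A₁}` and `s ∈ I_{A₂}`, so the claim reduces to solving
`γ(t) + γ(s) = z − w` in these intervals. Writing `t = c₁ + u`, `s = c₂ + v` with `c₁, c₂` the
midpoints, and `z − w = γ(c₁) + γ(c₂) + d` with `|d₁| ≤ L`, `|d₂| ≤ L²`, the first coordinate
gives `u = d₁ − v`, and the second becomes a quadratic equation in `v` whose linear part
`2(c₂ − c₁)v = 18 A₁ L v` dominates once `A₁` is large. The intermediate value theorem on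
`[−L/4, L/4]` then gives a solution with `|v| ≤ L/4` and `|u| ≤ 5L/4`
(`exists_parameter_shift`). All parameters involved are positive, where the two parabolas coincide.
-/

open MeasureTheory Set

noncomputable section

/-- The parabola `γ_adj(t) = (t, t²)` (parts in adjacent quadrants). -/
def gAdj (t : ℝ) : ℝ × ℝ := (t, t ^ 2)

/-- The parabola `γ_opp(t) = (t, sign(t)·t²)` (parts in opposite quadrants). -/
def gOpp (t : ℝ) : ℝ × ℝ := (t, Real.sign t * t ^ 2)

/-- The `(1,2)`-cube `Q = I × J` with `I = [x₀, x₀+L]`, `J = [y₀, y₀+L²]`,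
so that `ℓ(J) = ℓ(I)²`. -/
def cubeQ (x0 y0 L : ℝ) : Set (ℝ × ℝ) :=
  Icc x0 (x0 + L) ×ˢ Icc y0 (y0 + L ^ 2)

/-- The auxiliary interval `I_A = ℓ(I)·[A, A+3]`. -/
def intA (L A : ℝ) : Set ℝ := Icc (L * A) (L * (A + 3))

/-- `Q̃ = {x + γ(t) : x ∈ Q, t ∈ I_{A₁}}`. -/
def tilQ (γ : ℝ → ℝ × ℝ) (x0 y0 L A1 : ℝ) : Set (ℝ × ℝ) :=
  {w | ∃ x ∈ cubeQ x0 y0 L, ∃ t ∈ intA L A1, w = x + γ t}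

/-- `P = V₁ + γ(c_{I_{A₂}})` with `V₁ = Q + γ(c_{I_{A₁}})` and `A₂ = 10·A₁`. -/
def setP (γ : ℝ → ℝ × ℝ) (x0 y0 L A1 : ℝ) : Set (ℝ × ℝ) :=
  (fun x => x + γ (L * (A1 + 3/2)) + γ (L * (10 * A1 + 3/2))) '' cubeQ x0 y0 L

/-- `P̃ = {z - γ(t) : z ∈ P, t ∈ I_{A₂}}` with `A₂ = 10·A₁`. -/
def tilP (γ : ℝ → ℝ × ℝ) (x0 y0 L A1 : ℝ) : Set (ℝ × ℝ) :=
  {w | ∃ z ∈ setP γ x0 y0 L A1, ∃ t ∈ intA L (10 * A1), w = z - γ t}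

/-- `W₁ = Q̃ ∩ P̃`. -/
def setW1 (γ : ℝ → ℝ × ℝ) (x0 y0 L A1 : ℝ) : Set (ℝ × ℝ) :=
  tilQ γ x0 y0 L A1 ∩ tilP γ x0 y0 L A1

/-- `φ(a, −, B) = {a − γ(t) : t ∈ ℝ} ∩ B`. -/
def phiM (γ : ℝ → ℝ × ℝ) (a : ℝ × ℝ) (B : Set (ℝ × ℝ)) : Set (ℝ × ℝ) :=
  {w ∈ B | ∃ t : ℝ, w = a - γ t}

/-- `I(a, +, B) = {t ∈ ℝ : a + γ(t) ∈ B}`. -/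
def IsetP (γ : ℝ → ℝ × ℝ) (a : ℝ × ℝ) (B : Set (ℝ × ℝ)) : Set ℝ :=
  {t : ℝ | a + γ t ∈ B}


/-- Solvability of `(c₁ + u)² + (c₂ + v)² = c₁² + c₂² + d₂`, `u + v = d₁`, with `u = d₁ - v`
eliminated; here `c₁ = L(A + 3/2)` and `c₂ = L(10A + 3/2)`. -/
lemma exists_parameter_shift {A L d1 d2 : ℝ} (hA : 10 ≤ A) (hL : 0 < L)
    (h1 : |d1| ≤ L) (h2 : |d2| ≤ L ^ 2) :
    ∃ v ∈ Icc (-(L / 4)) (L / 4),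
      (L * (A + 3/2) + (d1 - v)) ^ 2 + (L * (10 * A + 3/2) + v) ^ 2 =
        (L * (A + 3/2)) ^ 2 + (L * (10 * A + 3/2)) ^ 2 + d2 := by
  obtain ⟨h1l, h1r⟩ := abs_le.mp h1
  obtain ⟨h2l, h2r⟩ := abs_le.mp h2
  let F : ℝ → ℝ := fun v => (L * (A + 3/2) + (d1 - v)) ^ 2 + (L * (10 * A + 3/2) + v) ^ 2
  have hF : ContinuousOn F (Icc (-(L / 4)) (L / 4)) := by
    apply Continuous.continuousOn
    fun_prop
  have hAL : 10 * L ^ 2 ≤ A * L ^ 2 := by gcongr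
  have hLA : 0 ≤ L * (A + 3/2) := by nlinarith
  have hl : (L * (A + 3/2)) * d1 ≤ (L * (A + 3/2)) * L := by gcongr
  have hr : (L * (A + 3/2)) * (-L) ≤ (L * (A + 3/2)) * d1 := by gcongr
  have hd : d1 ^ 2 ≤ L ^ 2 := sq_le_sq' h1l h1r
  have hLd : -(L * L) ≤ L * d1 ∧ L * d1 ≤ L * L := by constructor <;> nlinarith
  refine intermediate_value_Icc (by linarith) hF ⟨?_, ?_⟩
  · simp only [F]
    nlinarith
  · simp only [F]
    nlinarith [sq_nonneg (d1 - L / 4)]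

/-- On positive parameters both parabolas are `t ↦ (t, t²)`. -/
lemma parabola_of_pos {γ : ℝ → ℝ × ℝ} (hγ : γ = gAdj ∨ γ = gOpp) {t : ℝ} (ht : 0 < t) :
    γ t = (t, t ^ 2) := by
  rcases hγ with rfl | rfl
  · rfl
  · simp [gOpp, Real.sign_of_pos ht]

/-- **Key lemma (foliation of `Q` by parabolic segments).** For `γ ∈ {γ_adj, γ_opp}`
there is `A* ≥ 1` such that for every `A₁ ≥ A*` (with `A₂ = 10·A₁`), every
`(1,2)`-cube `Q` and every `z ∈ P`, the parabolic segments through the points of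
`φ(z, −, W₁)` foliate `Q`: `⋃_{y ∈ φ(z,−,W₁)} φ(y, −, Q) = Q`. -/
theorem key_lemma_foliation (γ : ℝ → ℝ × ℝ) (hγ : γ = gAdj ∨ γ = gOpp) :
    ∃ Astar : ℝ, 1 ≤ Astar ∧ ∀ A1 : ℝ, Astar ≤ A1 →
      ∀ x0 y0 L : ℝ, 0 < L →
        ∀ z ∈ setP γ x0 y0 L A1,
          (⋃ y ∈ phiM γ z (setW1 γ x0 y0 L A1), phiM γ y (cubeQ x0 y0 L)) =
            cubeQ x0 y0 L := by
  refine ⟨10, by norm_num, fun A1 hA x0 y0 L hL z hz => Subset.antisymm ?_ ?_⟩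
  · simp only [iUnion_subset_iff]
    exact fun y _ w hw => hw.1
  · intro w hw
    obtain ⟨q, hq, hqz⟩ := id hz
    have hw' := hw
    obtain ⟨⟨hq1, hq2⟩, hq3, hq4⟩ := hq
    obtain ⟨⟨hw1, hw2⟩, hw3, hw4⟩ := hw'
    obtain ⟨v, ⟨hv1, hv2⟩, hv⟩ := exists_parameter_shift (d1 := q.1 - w.1) (d2 := q.2 - w.2) hA hL
      (abs_le.mpr ⟨by linarith, by linarith⟩) (abs_le.mpr ⟨by linarith, by linarith⟩)
    have hLA : 10 * L ≤ L * A1 := by nlinarith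
    have ht : 0 < L * (A1 + 3/2) + (q.1 - w.1 - v) := by linarith
    have hs : 0 < L * (10 * A1 + 3/2) + v := by linarith
    have hc1 : 0 < L * (A1 + 3/2) := by linarith
    have hc2 : 0 < L * (10 * A1 + 3/2) := by linarith
    have key : w + γ (L * (A1 + 3/2) + (q.1 - w.1 - v)) = z - γ (L * (10 * A1 + 3/2) + v) := by
      rw [← hqz]
      simp only [parabola_of_pos hγ ht, parabola_of_pos hγ hs, parabola_of_pos hγ hc1,
        parabola_of_pos hγ hc2]
      ext
      · simp only [Prod.fst_add, Prod.fst_sub]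
        ring
      · simp only [Prod.snd_add, Prod.snd_sub]
        linarith
    simp only [mem_iUnion]
    refine ⟨w + γ (L * (A1 + 3/2) + (q.1 - w.1 - v)), ⟨⟨?_, ?_⟩, _, key⟩, hw, _,
      (add_sub_cancel_right _ _).symm⟩
    · exact ⟨w, hw, _, ⟨by linarith, by linarith⟩, rfl⟩
    · exact ⟨z, hz, _, ⟨by linarith, by linarith⟩, key⟩

end
end

section
/- Let β=(1,2) and γ∈{γ_adj,γ_opp}. There exists a constant C_0>0, depending only on γ, such that for every ε>0 there exists A*≥1 with the following property: for all A_1≥A* (and A_2=10A_1), every (1,2)-cube Q=I×J and every x∈Q, |m(I(x,+,W_1))/ℓ(I) − C_0| ≤ ε, where m denotes one-dimensional Lebesgue measure; in particular the convergence of m(I(x,+,W_1))/ℓ(I) to C_0 as A_1→∞ is uniform in x and Q. -/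
/-!
The limit is `C₀ = 10/9`. After rescaling to `L = 1` with the cube's corner at the origin, write
`x = (a, b)`, `t = A + 3/2 + u` and, for the parameter of `P̃`, `s = 10A + 3/2 + v`. All relevant
parameters are positive, so both curves are the parabola `(t, t²)`. Membership `x + γ(t) ∈ P̃` means
that some bounded `v` satisfies `a + u + v ∈ [0,1]` and
`b + 2(A + 3/2)u + u² + 2(10A + 3/2)v + v² ∈ [0,1]`. The second condition forces
`v = -u/10 + O(1/A)` (`offset_close`), so the first becomes `a + (9/10)u ∈ [0,1]` up to `O(1/A)`:
an interval of length `10/9` in `u`. It lies inside `|u| ≤ 3/2`, so the condition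
`x + γ(t) ∈ Q̃` holds automatically on it (take `x` itself). Hence the fibre is sandwiched between
two intervals of lengths `L(10/9 ± 6/A)` (`fibre_subset`, `subset_fibre`).
-/

open MeasureTheory Set

noncomputable section

/-- Both curves coincide with `t ↦ (t, t²)` on `t ≥ 0`, and both have first coordinate `t`. -/
lemma curve_eq {γ : ℝ → ℝ × ℝ} (hγ : γ = gAdj ∨ γ = gOpp) :
    (∀ t, (γ t).1 = t) ∧ ∀ t, 0 ≤ t → γ t = (t, t ^ 2) := by
  rcases hγ with rfl | rfl
  · exact ⟨fun _ => rfl, fun _ _ => rfl⟩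
  · refine ⟨fun _ => rfl, fun t ht => ?_⟩
    rcases ht.eq_or_lt with rfl | h
    · simp [gOpp]
    · simp [gOpp, Real.sign_of_pos h]

/-- The quantitative core: if the second coordinates balance up to an error `1`, the offsets
`u`, `v` from the midpoints `A + 3/2`, `10A + 3/2` satisfy `v = -u/10 + O(1/A)`. -/
lemma offset_close {A u v e : ℝ} (hA : 1 ≤ A) (hu : |u| ≤ 5 / 2) (hv : |v| ≤ 3 / 2)
    (he : |e| ≤ 1)
    (h : 2 * (A + 3 / 2) * u + u ^ 2 + (2 * (10 * A + 3 / 2) * v + v ^ 2) = e) :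
    |v + u / 10| ≤ (5 / 2) / A := by
  rw [abs_le] at *
  have hA0 : 0 < A := by linarith
  have hu2 : u ^ 2 ≤ 25 / 4 := by nlinarith
  have hv2 : v ^ 2 ≤ 9 / 4 := by nlinarith
  have hu0 := sq_nonneg u
  have hv0 := sq_nonneg v
  rw [neg_le, ← neg_le_neg_iff, neg_neg, ← neg_div, div_le_iff₀ hA0, le_div_iff₀ hA0]
  constructor <;> nlinarith

/-- Normalised upper inclusion (`L = 1`, lower-left corner of the cube at the origin). -/
lemma upper_bound {A a b τ s s' : ℝ} (hA : 1 ≤ A) (ha : a ∈ Icc (0 : ℝ) 1)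
    (hb : b ∈ Icc (0 : ℝ) 1) (hs : s ∈ Icc A (A + 3))
    (h1 : a + τ - s ∈ Icc (0 : ℝ) 1)
    (hs' : s' ∈ Icc (10 * A) (10 * A + 3))
    (h2 : a + τ + s' - (A + 3 / 2) - (10 * A + 3 / 2) ∈ Icc (0 : ℝ) 1)
    (h3 : b + τ ^ 2 + s' ^ 2 - (A + 3 / 2) ^ 2 - (10 * A + 3 / 2) ^ 2 ∈ Icc (0 : ℝ) 1) :
    τ ∈ Icc (A + 3 / 2 - 10 / 9 * a - 3 / A) (A + 3 / 2 + 10 / 9 * (1 - a) + 3 / A) := by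
  obtain ⟨ha0, ha1⟩ := ha
  obtain ⟨hb0, hb1⟩ := hb
  obtain ⟨hs0, hs1⟩ := hs
  obtain ⟨hs0', hs1'⟩ := hs'
  obtain ⟨h10, h11⟩ := h1
  obtain ⟨h20, h21⟩ := h2
  obtain ⟨h30, h31⟩ := h3
  have hA0 : 0 < A := by linarith
  have key := offset_close (A := A) (u := τ - (A + 3 / 2)) (v := s' - (10 * A + 3 / 2))
    (e := τ ^ 2 + s' ^ 2 - (A + 3 / 2) ^ 2 - (10 * A + 3 / 2) ^ 2) hA
    (abs_le.2 ⟨by linarith, by linarith⟩) (abs_le.2 ⟨by linarith, by linarith⟩)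
    (abs_le.2 ⟨by linarith, by linarith⟩) (by ring)
  have e1 : (5 / 2) / A = 5 / 2 * (1 / A) := by ring
  have e2 : 3 / A = 3 * (1 / A) := by ring
  have e3 : 0 < 1 / A := by positivity
  rw [abs_le, e1] at key
  rw [e2]
  constructor <;> linarith [key.1, key.2]

/-- Normalised lower inclusion: the parameter `s` is chosen so that the second coordinates
balance exactly. -/
lemma lower_bound {A a τ : ℝ} (hA : 20 ≤ A) (ha : a ∈ Icc (0 : ℝ) 1)
    (h : τ ∈ Icc (A + 3 / 2 - 10 / 9 * a + 3 / A) (A + 3 / 2 + 10 / 9 * (1 - a) - 3 / A)) :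
    τ ∈ Icc A (A + 3) ∧ ∃ s ∈ Icc (10 * A) (10 * A + 3),
      a + τ + s - (A + 3 / 2) - (10 * A + 3 / 2) ∈ Icc (0 : ℝ) 1 ∧
      τ ^ 2 + s ^ 2 = (A + 3 / 2) ^ 2 + (10 * A + 3 / 2) ^ 2 := by
  obtain ⟨ha0, ha1⟩ := ha
  obtain ⟨h0, h1⟩ := h
  have hA0 : 0 < A := by linarith
  have e1 : (5 / 2) / A = 5 / 2 * (1 / A) := by ring
  have e2 : 3 / A = 3 * (1 / A) := by ring
  have e3 : 0 < 1 / A := by positivity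
  rw [e2] at h0 h1
  have hu0 : A + 3 / 2 - 10 / 9 ≤ τ := by linarith
  have hu1 : τ ≤ A + 3 / 2 + 10 / 9 := by linarith
  have hs0 : 10 * A ≤ √((A + 3 / 2) ^ 2 + (10 * A + 3 / 2) ^ 2 - τ ^ 2) :=
    Real.le_sqrt_of_sq_le (by nlinarith)
  have hs1 : √((A + 3 / 2) ^ 2 + (10 * A + 3 / 2) ^ 2 - τ ^ 2) ≤ 10 * A + 3 :=
    Real.sqrt_le_iff.2 ⟨by linarith, by nlinarith⟩
  have hsq : √((A + 3 / 2) ^ 2 + (10 * A + 3 / 2) ^ 2 - τ ^ 2) ^ 2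
      = (A + 3 / 2) ^ 2 + (10 * A + 3 / 2) ^ 2 - τ ^ 2 := Real.sq_sqrt (by nlinarith)
  set s := √((A + 3 / 2) ^ 2 + (10 * A + 3 / 2) ^ 2 - τ ^ 2)
  have key := offset_close (A := A) (u := τ - (A + 3 / 2)) (v := s - (10 * A + 3 / 2))
    (e := 0) (by linarith)
    (abs_le.2 ⟨by linarith, by linarith⟩) (abs_le.2 ⟨by linarith, by linarith⟩)
    (by simp) (by linarith)
  rw [abs_le, e1] at key
  refine ⟨⟨by linarith, by linarith⟩, s, ⟨hs0, hs1⟩, ⟨?_, ?_⟩, by linarith⟩ <;>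
    linarith [key.1, key.2]

/-- Division by `L` sends `[L·p, L·q]` to `[p, q]`. -/
lemma mem_Icc_div {L p q t : ℝ} (hL : 0 < L) :
    t / L ∈ Icc p q ↔ t ∈ Icc (L * p) (L * q) := by
  simp only [mem_Icc, le_div_iff₀ hL, div_le_iff₀ hL, mul_comm L]

lemma fibre_subset {γ : ℝ → ℝ × ℝ} (hγ : γ = gAdj ∨ γ = gOpp) {A x0 y0 L : ℝ}
    (hA : 20 ≤ A) (hL : 0 < L) {x : ℝ × ℝ} (hx : x ∈ cubeQ x0 y0 L) :
    IsetP γ x (setW1 γ x0 y0 L A) ⊆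
      Icc (L * (A + 3 / 2 - 10 / 9 * ((x.1 - x0) / L) - 3 / A))
        (L * (A + 3 / 2 + 10 / 9 * (1 - (x.1 - x0) / L) + 3 / A)) := by
  obtain ⟨hγ1, hγ2⟩ := curve_eq hγ
  obtain ⟨x1, x2⟩ := x
  rintro t ⟨⟨⟨q1, q2⟩, hq, s, hs, hQ⟩, ⟨_, ⟨⟨p1, p2⟩, hp, rfl⟩, s', hs', hP⟩⟩
  simp only [cubeQ, mem_prod, mem_Icc, intA] at hx hq hp hs hs'
  have hLA : 0 < L * (A - 1) := mul_pos hL (by linarith)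
  have hLA' : 0 < L * A := mul_pos hL (by linarith)
  have ht : 0 ≤ t := by
    have := congrArg Prod.fst hQ
    simp only [Prod.fst_add, hγ1] at this
    linarith [hq.1.1, hx.1.2, hs.1]
  rw [hγ2 t ht, hγ2 s (by linarith)] at hQ
  rw [hγ2 t ht, hγ2 s' (by linarith), hγ2 (L * (A + 3 / 2)) (by linarith),
    hγ2 (L * (10 * A + 3 / 2)) (by linarith)] at hP
  simp only [Prod.mk_add_mk, Prod.mk_sub_mk, Prod.mk.injEq] at hQ hP
  have hL2 : 0 < L ^ 2 := by positivity
  rw [← mem_Icc_div hL]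
  have hne := hL.ne'
  refine upper_bound (b := (x2 - y0) / L ^ 2) (s := s / L) (s' := s' / L) (by linarith)
    ((mem_Icc_div hL).2 ⟨by linarith, by linarith⟩)
    ((mem_Icc_div hL2).2 ⟨by linarith, by linarith⟩)
    ((mem_Icc_div hL).2 ⟨by linarith, by linarith⟩) ?_
    ((mem_Icc_div hL).2 ⟨by linarith, by linarith⟩) ?_ ?_
  · have : (x1 - x0) / L + t / L - s / L = (q1 - x0) / L := by
      rw [show q1 = x1 + t - s by linarith [hQ.1]]; field_simp; ring
    rw [this]
    exact (mem_Icc_div hL).2 ⟨by linarith, by linarith⟩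
  · have : (x1 - x0) / L + t / L + s' / L - (A + 3 / 2) - (10 * A + 3 / 2)
        = (p1 - x0) / L := by
      rw [show p1 = x1 + t + s' - L * (A + 3 / 2) - L * (10 * A + 3 / 2) by linarith [hP.1]]
      field_simp; ring
    rw [this]
    exact (mem_Icc_div hL).2 ⟨by linarith, by linarith⟩
  · have : (x2 - y0) / L ^ 2 + (t / L) ^ 2 + (s' / L) ^ 2 - (A + 3 / 2) ^ 2
        - (10 * A + 3 / 2) ^ 2 = (p2 - y0) / L ^ 2 := by
      rw [show p2 = x2 + t ^ 2 + s' ^ 2 - (L * (A + 3 / 2)) ^ 2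
        - (L * (10 * A + 3 / 2)) ^ 2 by linarith [hP.2]]
      field_simp; ring
    rw [this]
    exact (mem_Icc_div hL2).2 ⟨by linarith, by linarith⟩

lemma subset_fibre {γ : ℝ → ℝ × ℝ} (hγ : γ = gAdj ∨ γ = gOpp) {A x0 y0 L : ℝ}
    (hA : 20 ≤ A) (hL : 0 < L) {x : ℝ × ℝ} (hx : x ∈ cubeQ x0 y0 L) :
    Icc (L * (A + 3 / 2 - 10 / 9 * ((x.1 - x0) / L) + 3 / A))
        (L * (A + 3 / 2 + 10 / 9 * (1 - (x.1 - x0) / L) - 3 / A)) ⊆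
      IsetP γ x (setW1 γ x0 y0 L A) := by
  obtain ⟨-, hγ2⟩ := curve_eq hγ
  obtain ⟨x1, x2⟩ := x
  intro t ht
  have hx' := hx
  simp only [cubeQ, mem_prod, mem_Icc] at hx'
  obtain ⟨hτ, s, hs, h1, h2⟩ := lower_bound hA
    ((mem_Icc_div hL).2 ⟨by linarith, by linarith⟩) ((mem_Icc_div hL).2 ht)
  have htA := (mem_Icc_div hL).1 hτ
  have hLA : 0 < L * A := mul_pos hL (by linarith)
  have ht0 : 0 ≤ t := by linarith [htA.1]
  have hs0 : 0 ≤ L * s := mul_nonneg hL.le (by linarith [hs.1])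
  refine ⟨⟨(x1, x2), hx, t, htA, rfl⟩, _,
    ⟨(x1 + t + L * s - L * (A + 3 / 2) - L * (10 * A + 3 / 2), x2), ⟨?_, hx.2⟩, rfl⟩,
    L * s, ⟨?_, ?_⟩, ?_⟩
  · have : x1 + t + L * s - L * (A + 3 / 2) - L * (10 * A + 3 / 2)
      = x0 + L * ((x1 - x0) / L + t / L + s - (A + 3 / 2) - (10 * A + 3 / 2)) := by
      field_simp; ring
    simp only [this]
    constructor
    · linarith [mul_nonneg hL.le h1.1]
    · linarith [mul_le_mul_of_nonneg_left h1.2 hL.le]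
  · exact mul_le_mul_of_nonneg_left hs.1 hL.le
  · exact mul_le_mul_of_nonneg_left hs.2 hL.le
  · rw [hγ2 t ht0, hγ2 _ hs0, hγ2 (L * (A + 3 / 2)) (by linarith),
      hγ2 (L * (10 * A + 3 / 2)) (by linarith)]
    simp only [Prod.mk_add_mk, Prod.mk_sub_mk, Prod.mk.injEq]
    refine ⟨by ring, ?_⟩
    have h3 : t ^ 2 = L ^ 2 * (t / L) ^ 2 := by field_simp
    rw [h3]
    linear_combination L ^ 2 * h2

/-- **Uniform limit of the normalised fibre length.** For `γ ∈ {γ_adj, γ_opp}`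
there is an absolute constant `C₀ > 0` such that `m(I(x,+,W₁))/ℓ(I) → C₀` as
`A₁ → ∞`, uniformly in `x ∈ Q` and in the `(1,2)`-cube `Q`. -/
theorem fibre_length_limit (γ : ℝ → ℝ × ℝ) (hγ : γ = gAdj ∨ γ = gOpp) :
    ∃ C0 : ℝ, 0 < C0 ∧ ∀ ε : ℝ, 0 < ε →
      ∃ Astar : ℝ, 1 ≤ Astar ∧ ∀ A1 : ℝ, Astar ≤ A1 →
        ∀ x0 y0 L : ℝ, 0 < L →
          ∀ x ∈ cubeQ x0 y0 L,
            |(volume (IsetP γ x (setW1 γ x0 y0 L A1))).toReal / L - C0| ≤ ε := by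
  refine ⟨10 / 9, by norm_num, fun ε hε => ⟨6 / ε + 20, ?_, ?_⟩⟩
  · have : 0 < 6 / ε := by positivity
    linarith
  intro A hA x0 y0 L hL x hx
  have hε6 : 0 < 6 / ε := by positivity
  have hA20 : 20 ≤ A := by linarith
  have hA0 : 0 < A := by linarith
  have hAε : 6 / A ≤ ε := by
    rw [div_le_iff₀ hA0]
    have : 6 / ε ≤ A := by linarith
    rw [div_le_iff₀ hε] at this
    linarith
  have h6 : 6 / A = 3 / A + 3 / A := by ring
  have h3 : 3 / A ≤ 3 / 20 := div_le_div_of_nonneg_left (by norm_num) (by norm_num) hA20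
  have hup := measure_mono (μ := volume) (fibre_subset hγ hA20 hL hx)
  have hlo := measure_mono (μ := volume) (subset_fibre hγ hA20 hL hx)
  rw [Real.volume_Icc, ← mul_sub] at hup hlo
  have hfin := ne_top_of_le_ne_top ENNReal.ofReal_ne_top hup
  have h3p : 0 < 3 / A := by positivity
  have hup' := ENNReal.toReal_le_of_le_ofReal (mul_nonneg hL.le (by linarith)) hup
  have hlo' := (ENNReal.ofReal_le_iff_le_toReal hfin).1 hlo
  rw [mul_comm, ← div_le_iff₀ hL] at hup'
  rw [mul_comm, ← le_div_iff₀ hL] at hlo'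
  rw [abs_le]
  constructor <;> linarith

end
end

section
/- Let β=(1,2) and γ∈{γ_adj,γ_opp}. There exist constants 0<c<C and A*≥1 such that for all A_1≥A* (and A_2=10A_1) and every (1,2)-cube Q=I×J the following hold, with m one-dimensional Lebesgue measure: (a) for every z∈P^c and every y∈φ(z,−,W_1), c·ℓ(I)/A_1 ≤ m(I(y,+,P)) ≤ C·ℓ(I)/A_1; (b) for every r∈[1,∞), every z∈Δ_r^{lt}∪Δ_r^{rb} and every y∈φ(z,−,W_1), c·2^{−r}·ℓ(I)/A_1 ≤ m(I(y,+,P)) ≤ C·2^{−r}·ℓ(I)/A_1. -/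
/-!
If `y ∈ Q̃`, every `t` with `y + γ(t) ∈ P` lies in `ℓ(I)·[10A₁ - 1, 10A₁ + 4]`, simply because of
the first coordinates. There `γ(t) = (t, t²)` for both curves, and the second coordinate
`t ↦ y₂ + t²` has difference quotients between `19·ℓ(I)·A₁` and `24·ℓ(I)·A₁`. Starting from the
parameter `t₀` with `y + γ(t₀) = z`, the fibre therefore extends to the right until `y + γ(t)`
meets the right or the top side of `P`, i.e. by an amount comparable to the minimum of the
horizontal gap and of the vertical gap divided by `ℓ(I)·A₁`, and similarly to the left
(`fibre_lower_right`, `fibre_lower_left`, `fibre_right_le`, `fibre_left_le`).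

For `z ∈ P^c` one of the two extensions is at least `ℓ(I)/(48A₁)`, and both are at most
`ℓ(I)/A₁` because `P` has height `ℓ(I)²`. For `z ∈ Δ_r^{lt}` either the horizontal gap to the left
side equals `2·2^{-r}ℓ(I)/A₁` or the vertical gap to the top side equals `2^{-r}ℓ(I)²`, and neither
gap is larger than that; this gives both bounds, and `Δ_r^{rb}` is symmetric. The topological
input is the description of `Δ_r^{lt}`, `Δ_r^{rb}` in `deltaLt_subset`, `deltaRb_subset`.
The constants are `c = 1/48`, `C = 3`, `A* = 10`.
-/

open MeasureTheory Set

noncomputable section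

/-- The translation vector `γ(c_{I_{A₁}}) + γ(c_{I_{A₂}})` carrying `Q` onto `P`. -/
def vshift (γ : ℝ → ℝ × ℝ) (L A1 : ℝ) : ℝ × ℝ :=
  γ (L * (A1 + 3/2)) + γ (L * (10 * A1 + 3/2))

/-- The left-top corner box `P^{lt}_r = v_lt + R_{1,−1}(r)`, where `v_lt` is the
left-top vertex of `P` and `R_{1,−1}(r) = [0, 2^{-(r-1)}ℓ(I)/A₁] × [-2^{-r}ℓ(I)², 0]`. -/
def Plt (γ : ℝ → ℝ × ℝ) (x0 y0 L A1 r : ℝ) : Set (ℝ × ℝ) :=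
  Icc (x0 + (vshift γ L A1).1) (x0 + (vshift γ L A1).1 + (2:ℝ) ^ (-(r - 1)) * L / A1) ×ˢ
    Icc (y0 + L ^ 2 + (vshift γ L A1).2 - (2:ℝ) ^ (-r) * L ^ 2)
      (y0 + L ^ 2 + (vshift γ L A1).2)

/-- The right-bottom corner box `P^{rb}_r = v_rb + R_{−1,1}(r)`, where `v_rb` is the
right-bottom vertex of `P`. -/
def Prb (γ : ℝ → ℝ × ℝ) (x0 y0 L A1 r : ℝ) : Set (ℝ × ℝ) :=
  Icc (x0 + L + (vshift γ L A1).1 - (2:ℝ) ^ (-(r - 1)) * L / A1)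
      (x0 + L + (vshift γ L A1).1) ×ˢ
    Icc (y0 + (vshift γ L A1).2) (y0 + (vshift γ L A1).2 + (2:ℝ) ^ (-r) * L ^ 2)

/-- `Δ_r(P^{lt}_r) = closure(∂P^{lt}_r ∖ ∂P)`. -/
def DeltaLt (γ : ℝ → ℝ × ℝ) (x0 y0 L A1 r : ℝ) : Set (ℝ × ℝ) :=
  closure (frontier (Plt γ x0 y0 L A1 r) \ frontier (setP γ x0 y0 L A1))

/-- `Δ_r(P^{rb}_r) = closure(∂P^{rb}_r ∖ ∂P)`. -/
def DeltaRb (γ : ℝ → ℝ × ℝ) (x0 y0 L A1 r : ℝ) : Set (ℝ × ℝ) :=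
  closure (frontier (Prb γ x0 y0 L A1 r) \ frontier (setP γ x0 y0 L A1))

/-- The central part `P^c = P ∖ (P^{lt}_1 ∪ P^{rb}_1)`. -/
def Pcore (γ : ℝ → ℝ × ℝ) (x0 y0 L A1 : ℝ) : Set (ℝ × ℝ) :=
  setP γ x0 y0 L A1 \ (Plt γ x0 y0 L A1 1 ∪ Prb γ x0 y0 L A1 1)

/-- The parameters `t` for which `(y₁, y₂) + (t, t²)` lies in `[X, X+L] × [Y, Y+L²]`. -/
def fibre (X Y L y1 y2 : ℝ) : Set ℝ :=
  {t | (X ≤ y1 + t ∧ y1 + t ≤ X + L) ∧ (Y ≤ y2 + t ^ 2 ∧ y2 + t ^ 2 ≤ Y + L ^ 2)}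

/-! ### Extending a fibre to the right and to the left -/

section Fibre

variable {X Y L A y1 y2 t0 t d p q : ℝ}

lemma fibre_lower_right (hL : 0 < L) (hA : 10 ≤ A) (hlo : L * (10 * A - 1) ≤ X - y1)
    (hhi : X - y1 ≤ L * (10 * A + 3)) (h0 : t0 ∈ fibre X Y L y1 y2)
    (h1 : d ≤ X + L - (y1 + t0)) (h2 : d * (24 * L * A) ≤ Y + L ^ 2 - (y2 + t0 ^ 2)) :
    ENNReal.ofReal d ≤ volume (fibre X Y L y1 y2) := by
  have hLA : L * 10 ≤ L * A := mul_le_mul_of_nonneg_left hA hL.le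
  have hsub : Icc t0 (t0 + d) ⊆ fibre X Y L y1 y2 := by
    rintro t ⟨ht0, ht1⟩
    obtain ⟨⟨a1, a2⟩, a3, a4⟩ := h0
    have hs : t + t0 ≤ 24 * L * A := by nlinarith
    have hs0 : 0 ≤ t + t0 := by nlinarith
    have e : t ^ 2 = t0 ^ 2 + (t - t0) * (t + t0) := by ring
    have k1 : (t - t0) * (t + t0) ≤ d * (24 * L * A) :=
      mul_le_mul (by linarith) hs hs0 (by linarith)
    have k2 : 0 ≤ (t - t0) * (t + t0) := mul_nonneg (by linarith) hs0
    exact ⟨⟨by linarith, by linarith⟩, by linarith, by linarith⟩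
  calc ENNReal.ofReal d = volume (Icc t0 (t0 + d)) := by rw [Real.volume_Icc]; congr 1; ring
    _ ≤ _ := measure_mono hsub

lemma fibre_lower_left (hL : 0 < L) (hA : 10 ≤ A) (hlo : L * (10 * A - 1) ≤ X - y1)
    (hhi : X - y1 ≤ L * (10 * A + 3)) (h0 : t0 ∈ fibre X Y L y1 y2)
    (h1 : d ≤ y1 + t0 - X) (h2 : d * (24 * L * A) ≤ y2 + t0 ^ 2 - Y) :
    ENNReal.ofReal d ≤ volume (fibre X Y L y1 y2) := by
  have hLA : L * 10 ≤ L * A := mul_le_mul_of_nonneg_left hA hL.le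
  have hsub : Icc (t0 - d) t0 ⊆ fibre X Y L y1 y2 := by
    rintro t ⟨ht0, ht1⟩
    obtain ⟨⟨a1, a2⟩, a3, a4⟩ := h0
    have hs : t + t0 ≤ 24 * L * A := by nlinarith
    have hs0 : 0 ≤ t + t0 := by nlinarith
    have e : t ^ 2 = t0 ^ 2 - (t0 - t) * (t + t0) := by ring
    have k1 : (t0 - t) * (t + t0) ≤ d * (24 * L * A) :=
      mul_le_mul (by linarith) hs hs0 (by linarith)
    have k2 : 0 ≤ (t0 - t) * (t + t0) := mul_nonneg (by linarith) hs0
    exact ⟨⟨by linarith, by linarith⟩, by linarith, by linarith⟩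
  calc ENNReal.ofReal d = volume (Icc (t0 - d) t0) := by rw [Real.volume_Icc]; congr 1; ring
    _ ≤ _ := measure_mono hsub

lemma fibre_right_le (hL : 0 < L) (hA : 10 ≤ A) (hlo : L * (10 * A - 1) ≤ X - y1)
    (h0 : t0 ∈ fibre X Y L y1 y2) (ht : t ∈ fibre X Y L y1 y2) :
    (t - t0) * (19 * L * A) ≤ Y + L ^ 2 - (y2 + t0 ^ 2) := by
  have hLA : L * 10 ≤ L * A := mul_le_mul_of_nonneg_left hA hL.le
  obtain ⟨⟨a1, a2⟩, a3, a4⟩ := h0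
  obtain ⟨⟨b1, b2⟩, b3, b4⟩ := ht
  have hs : 19 * L * A ≤ t + t0 := by nlinarith
  rcases le_total t t0 with h | h
  · have := mul_nonneg (sub_nonneg.2 h) (show 0 ≤ 19 * L * A by linarith)
    linarith
  · have := mul_le_mul_of_nonneg_left hs (sub_nonneg.2 h)
    linarith

lemma fibre_left_le (hL : 0 < L) (hA : 10 ≤ A) (hlo : L * (10 * A - 1) ≤ X - y1)
    (h0 : t0 ∈ fibre X Y L y1 y2) (ht : t ∈ fibre X Y L y1 y2) :
    (t0 - t) * (19 * L * A) ≤ y2 + t0 ^ 2 - Y := by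
  have hLA : L * 10 ≤ L * A := mul_le_mul_of_nonneg_left hA hL.le
  obtain ⟨⟨a1, a2⟩, a3, a4⟩ := h0
  obtain ⟨⟨b1, b2⟩, b3, b4⟩ := ht
  have hs : 19 * L * A ≤ t + t0 := by nlinarith
  rcases le_total t0 t with h | h
  · have := mul_nonneg (sub_nonneg.2 h) (show 0 ≤ 19 * L * A by linarith)
    linarith
  · have := mul_le_mul_of_nonneg_left hs (sub_nonneg.2 h)
    linarith

lemma fibre_upper {K : ℝ} (hK : p + q ≤ K)
    (hp : ∀ t ∈ fibre X Y L y1 y2, t0 - t ≤ p) (hq : ∀ t ∈ fibre X Y L y1 y2, t - t0 ≤ q) :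
    volume (fibre X Y L y1 y2) ≤ ENNReal.ofReal K := by
  calc volume (fibre X Y L y1 y2) ≤ volume (Icc (t0 - p) (t0 + q)) :=
        measure_mono fun t ht => ⟨by linarith [hp t ht], by linarith [hq t ht]⟩
    _ ≤ _ := by
        rw [Real.volume_Icc]
        exact ENNReal.ofReal_le_ofReal (by linarith)

/-- Converts a vertical gap into a bound on the parameter: at slope at least `19LA`, a rise of at
most `εL²` takes a parameter increment `h` of at most `εL/A`. -/
lemma le_of_mul_le_height {ε h : ℝ} (hL : 0 < L) (hA : 10 ≤ A) (hε : 0 ≤ ε)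
    (h1 : h * (19 * L * A) ≤ ε * L ^ 2) : h ≤ ε * L / A := by
  have hA0 : 0 < A := by linarith
  rw [le_div_iff₀ hA0]
  have : 0 ≤ ε * L := by positivity
  have h2 : h * A * 19 ≤ ε * L := by
    refine le_of_mul_le_mul_right ?_ hL
    linarith
  nlinarith

lemma mul_height_eq {ε : ℝ} (hA : 10 ≤ A) :
    (1 / 48 * ε * L / A) * (24 * L * A) = ε * L ^ 2 / 2 := by
  have hA0 : A ≠ 0 := by positivity
  field_simp
  ring

end Fibre

/-! ### The two estimates in coordinates -/

section Estimates

variable {X Y L A y1 y2 t0 δ : ℝ}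

lemma fibre_core (hL : 0 < L) (hA : 10 ≤ A) (hlo : L * (10 * A - 1) ≤ X - y1)
    (hhi : X - y1 ≤ L * (10 * A + 3)) (h0 : t0 ∈ fibre X Y L y1 y2)
    (hlt : Y + L ^ 2 / 2 ≤ y2 + t0 ^ 2 → X + L / A ≤ y1 + t0)
    (hrb : y2 + t0 ^ 2 ≤ Y + L ^ 2 / 2 → y1 + t0 ≤ X + L - L / A) :
    ENNReal.ofReal (1 / 48 * L / A) ≤ volume (fibre X Y L y1 y2) ∧
      volume (fibre X Y L y1 y2) ≤ ENNReal.ofReal (3 * L / A) := by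
  have hA0 : 0 < A := by linarith
  have hLA : 0 < L / A := by positivity
  have e1 : 1 / 48 * L / A = 1 / 48 * (L / A) := by ring
  have e2 : 1 / 48 * L / A * (24 * L * A) = L ^ 2 / 2 := by
    have := mul_height_eq (L := L) (ε := 1) hA
    simpa using this
  constructor
  · rcases le_total (Y + L ^ 2 / 2) (y2 + t0 ^ 2) with h | h
    · have := hlt h
      exact fibre_lower_left hL hA hlo hhi h0 (by linarith) (by linarith)
    · have := hrb h
      exact fibre_lower_right hL hA hlo hhi h0 (by linarith) (by linarith)
  · have h0' := h0
    obtain ⟨⟨a1, a2⟩, a3, a4⟩ := h0'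
    have e3 : 3 * L / A = 3 * (L / A) := by ring
    have e4 : 1 * L / A = L / A := by ring
    refine fibre_upper (t0 := t0) (p := 1 * L / A) (q := 1 * L / A) (by linarith)
      (fun t ht => ?_) fun t ht => ?_
    · have := fibre_left_le hL hA hlo h0 ht
      exact le_of_mul_le_height hL hA zero_le_one (by linarith)
    · have := fibre_right_le hL hA hlo h0 ht
      exact le_of_mul_le_height hL hA zero_le_one (by linarith)

lemma fibre_lt (hL : 0 < L) (hA : 10 ≤ A) (hlo : L * (10 * A - 1) ≤ X - y1)
    (hhi : X - y1 ≤ L * (10 * A + 3)) (h0 : t0 ∈ fibre X Y L y1 y2) (hδ : 0 < δ)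
    (hδ' : δ ≤ 1 / 2) (hu : y1 + t0 ≤ X + 2 * δ * L / A)
    (hv : Y + L ^ 2 - δ * L ^ 2 ≤ y2 + t0 ^ 2)
    (h : y1 + t0 = X + 2 * δ * L / A ∨ y2 + t0 ^ 2 = Y + L ^ 2 - δ * L ^ 2) :
    ENNReal.ofReal (1 / 48 * δ * L / A) ≤ volume (fibre X Y L y1 y2) ∧
      volume (fibre X Y L y1 y2) ≤ ENNReal.ofReal (3 * δ * L / A) := by
  have hA0 : 0 < A := by linarith
  have hLA : 0 < δ * L / A := by positivity
  have hLA' : δ * L / A ≤ L / 20 := by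
    rw [div_le_iff₀ hA0]
    nlinarith
  have e1 : 1 / 48 * δ * L / A = 1 / 48 * (δ * L / A) := by ring
  have e2 := mul_height_eq (L := L) (ε := δ) hA
  have e3 : 3 * δ * L / A = 3 * (δ * L / A) := by ring
  have e4 : 2 * δ * L / A = 2 * (δ * L / A) := by ring
  have hL2 : 0 < L ^ 2 := by positivity
  have hδL : δ * L ^ 2 ≤ L ^ 2 / 2 := by nlinarith
  have hδL0 : 0 < δ * L ^ 2 := by positivity
  constructor
  · rcases h with h | h
    · exact fibre_lower_left hL hA hlo hhi h0 (by linarith) (by linarith)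
    · exact fibre_lower_right hL hA hlo hhi h0 (by linarith) (by linarith)
  · refine fibre_upper (t0 := t0) (p := 2 * δ * L / A) (q := δ * L / A) (by linarith)
      (fun t ht => ?_) fun t ht => ?_
    · linarith [ht.1.1]
    · have := fibre_right_le hL hA hlo h0 ht
      exact le_of_mul_le_height hL hA hδ.le (by linarith)

lemma fibre_rb (hL : 0 < L) (hA : 10 ≤ A) (hlo : L * (10 * A - 1) ≤ X - y1)
    (hhi : X - y1 ≤ L * (10 * A + 3)) (h0 : t0 ∈ fibre X Y L y1 y2) (hδ : 0 < δ)
    (hδ' : δ ≤ 1 / 2) (hu : X + L - 2 * δ * L / A ≤ y1 + t0)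
    (hv : y2 + t0 ^ 2 ≤ Y + δ * L ^ 2)
    (h : y1 + t0 = X + L - 2 * δ * L / A ∨ y2 + t0 ^ 2 = Y + δ * L ^ 2) :
    ENNReal.ofReal (1 / 48 * δ * L / A) ≤ volume (fibre X Y L y1 y2) ∧
      volume (fibre X Y L y1 y2) ≤ ENNReal.ofReal (3 * δ * L / A) := by
  have hA0 : 0 < A := by linarith
  have hLA : 0 < δ * L / A := by positivity
  have hLA' : δ * L / A ≤ L / 20 := by
    rw [div_le_iff₀ hA0]
    nlinarith
  have e1 : 1 / 48 * δ * L / A = 1 / 48 * (δ * L / A) := by ring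
  have e2 := mul_height_eq (L := L) (ε := δ) hA
  have e3 : 3 * δ * L / A = 3 * (δ * L / A) := by ring
  have e4 : 2 * δ * L / A = 2 * (δ * L / A) := by ring
  have hL2 : 0 < L ^ 2 := by positivity
  have hδL : δ * L ^ 2 ≤ L ^ 2 / 2 := by nlinarith
  have hδL0 : 0 < δ * L ^ 2 := by positivity
  constructor
  · rcases h with h | h
    · exact fibre_lower_right hL hA hlo hhi h0 (by linarith) (by linarith)
    · exact fibre_lower_left hL hA hlo hhi h0 (by linarith) (by linarith)
  · refine fibre_upper (t0 := t0) (p := δ * L / A) (q := 2 * δ * L / A) (by linarith)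
      (fun t ht => ?_) fun t ht => ?_
    · have := fibre_left_le hL hA hlo h0 ht
      exact le_of_mul_le_height hL hA hδ.le (by linarith)
    · linarith [ht.1.2]

end Estimates

/-! ### The sets of the statement in coordinates -/

section Sets

variable {γ : ℝ → ℝ × ℝ} {x0 y0 L A1 : ℝ}

lemma curve_fst (hγ : γ = gAdj ∨ γ = gOpp) (t : ℝ) : (γ t).1 = t := by
  rcases hγ with rfl | rfl <;> rfl

lemma curve_snd (hγ : γ = gAdj ∨ γ = gOpp) {t : ℝ} (ht : 0 < t) : (γ t).2 = t ^ 2 := by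
  rcases hγ with rfl | rfl
  · rfl
  · simp [gOpp, Real.sign_of_pos ht]

lemma setP_eq (γ : ℝ → ℝ × ℝ) (x0 y0 L A1 : ℝ) :
    setP γ x0 y0 L A1 = Icc (x0 + (vshift γ L A1).1) (x0 + (vshift γ L A1).1 + L) ×ˢ
      Icc (y0 + (vshift γ L A1).2) (y0 + (vshift γ L A1).2 + L ^ 2) := by
  ext ⟨a, b⟩
  simp only [setP, cubeQ, mem_image, mem_prod, mem_Icc, vshift, Prod.fst_add, Prod.snd_add]
  constructor
  · rintro ⟨⟨u, v⟩, ⟨⟨h1, h2⟩, h3, h4⟩, h⟩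
    obtain ⟨rfl, rfl⟩ := Prod.mk.inj h
    simp only [Prod.fst_add, Prod.snd_add] at *
    exact ⟨⟨by linarith, by linarith⟩, by linarith, by linarith⟩
  · rintro ⟨⟨h1, h2⟩, h3, h4⟩
    refine ⟨(a - ((γ (L * (A1 + 3 / 2))).1 + (γ (L * (10 * A1 + 3 / 2))).1),
      b - ((γ (L * (A1 + 3 / 2))).2 + (γ (L * (10 * A1 + 3 / 2))).2)),
      ⟨⟨by linarith, by linarith⟩, by linarith, by linarith⟩, ?_⟩
    ext <;> simp only [Prod.fst_add, Prod.snd_add] <;> ring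

lemma vshift_fst (hγ : γ = gAdj ∨ γ = gOpp) (L A1 : ℝ) :
    (vshift γ L A1).1 = L * (11 * A1 + 3) := by
  simp only [vshift, Prod.fst_add, curve_fst hγ]
  ring

lemma tilQ_fst_bounds (hγ : γ = gAdj ∨ γ = gOpp) {y : ℝ × ℝ} (hy : y ∈ tilQ γ x0 y0 L A1) :
    L * (10 * A1 - 1) ≤ x0 + (vshift γ L A1).1 - y.1 ∧
      x0 + (vshift γ L A1).1 - y.1 ≤ L * (10 * A1 + 3) := by
  obtain ⟨x, ⟨⟨h1, h2⟩, -⟩, t, ⟨h3, h4⟩, rfl⟩ := hy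
  rw [vshift_fst hγ, Prod.fst_add, curve_fst hγ]
  constructor <;> linarith

lemma IsetP_eq (hγ : γ = gAdj ∨ γ = gOpp) (hL : 0 < L) (hA : 10 ≤ A1) {y : ℝ × ℝ}
    (hy : y ∈ tilQ γ x0 y0 L A1) :
    IsetP γ y (setP γ x0 y0 L A1) =
      fibre (x0 + (vshift γ L A1).1) (y0 + (vshift γ L A1).2) L y.1 y.2 := by
  have hb := (tilQ_fst_bounds hγ hy).1
  ext t
  simp only [IsetP, setP_eq, fibre, mem_ofPred_eq, mem_prod, mem_Icc, Prod.fst_add, Prod.snd_add,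
    curve_fst hγ]
  refine and_congr_right fun h => ?_
  have ht : 0 < t := by nlinarith
  rw [curve_snd hγ ht]

/-- A point `z ∈ P` and a point `y ∈ φ(z,−,W₁)` determine a parameter `t₀` with
`z = y + (t₀, t₀²)`; it belongs to the fibre over `y`. -/
lemma exists_param (hγ : γ = gAdj ∨ γ = gOpp) (hL : 0 < L) (hA : 10 ≤ A1) {y z : ℝ × ℝ}
    (hz : z ∈ setP γ x0 y0 L A1) (hy : y ∈ phiM γ z (setW1 γ x0 y0 L A1)) :
    ∃ t0 ∈ fibre (x0 + (vshift γ L A1).1) (y0 + (vshift γ L A1).2) L y.1 y.2,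
      z.1 = y.1 + t0 ∧ z.2 = y.2 + t0 ^ 2 := by
  obtain ⟨⟨hQ, -⟩, t, ht⟩ := hy
  have hzt : z = y + γ t := by rw [ht]; abel
  have hmem : t ∈ IsetP γ y (setP γ x0 y0 L A1) := by
    change y + γ t ∈ setP γ x0 y0 L A1
    rwa [← hzt]
  rw [IsetP_eq hγ hL hA hQ] at hmem
  have hb := (tilQ_fst_bounds hγ hQ).1
  have ht0 : 0 < t := by nlinarith [hmem.1.1]
  refine ⟨t, hmem, ?_, ?_⟩
  · rw [hzt, Prod.fst_add, curve_fst hγ]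
  · rw [hzt, Prod.snd_add, curve_snd hγ ht0]

/-- A boundary point of the smaller of two nested closed rectangles which is not a boundary point
of the larger one is interior to the larger one, without being interior to the smaller one. -/
lemma mem_of_mem_frontier_diff {a b c d a' b' c' d' : ℝ} {z : ℝ × ℝ}
    (hsub : Icc a b ×ˢ Icc c d ⊆ Icc a' b' ×ˢ Icc c' d')
    (hz : z ∈ frontier (Icc a b ×ˢ Icc c d) \ frontier (Icc a' b' ×ˢ Icc c' d')) :
    z ∈ Icc a b ×ˢ Icc c d ∧ z ∈ Ioo a' b' ×ˢ Ioo c' d' ∧ z ∉ Ioo a b ×ˢ Ioo c d := by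
  obtain ⟨h1, h2⟩ := hz
  have hc : IsClosed (Icc a b ×ˢ Icc c d) := isClosed_Icc.prod isClosed_Icc
  have hc' : IsClosed (Icc a' b' ×ˢ Icc c' d') := isClosed_Icc.prod isClosed_Icc
  rw [hc.frontier_eq, interior_prod_eq, interior_Icc, interior_Icc] at h1
  rw [hc'.frontier_eq, interior_prod_eq, interior_Icc, interior_Icc] at h2
  refine ⟨h1.1, ?_, h1.2⟩
  by_contra h
  exact h2 ⟨hsub h1.1, h⟩

lemma two_rpow_width (r L A : ℝ) :
    (2 : ℝ) ^ (-(r - 1)) * L / A = 2 * (2 : ℝ) ^ (-r) * L / A := by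
  rw [show -(r - 1) = -r + 1 by ring, Real.rpow_add_one (by norm_num)]
  ring

lemma width_bounds {δ A : ℝ} (hL : 0 < L) (hA : 10 ≤ A) (hδ : 0 < δ) (hδ' : δ ≤ 1 / 2) :
    0 ≤ 2 * δ * L / A ∧ 2 * δ * L / A ≤ L ∧ 0 ≤ δ * L ^ 2 ∧ δ * L ^ 2 ≤ L ^ 2 := by
  have hA0 : 0 < A := by linarith
  refine ⟨by positivity, ?_, by positivity, ?_⟩
  · rw [div_le_iff₀ hA0]
    nlinarith
  · nlinarith [sq_nonneg L]

lemma deltaLt_subset {r : ℝ} (hL : 0 < L) (hA : 10 ≤ A1) (hδ : (2 : ℝ) ^ (-r) ≤ 1 / 2)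
    {z : ℝ × ℝ} (hz : z ∈ DeltaLt γ x0 y0 L A1 r) :
    z ∈ setP γ x0 y0 L A1 ∧ z.1 ≤ x0 + (vshift γ L A1).1 + 2 * (2 : ℝ) ^ (-r) * L / A1 ∧
      y0 + (vshift γ L A1).2 + L ^ 2 - (2 : ℝ) ^ (-r) * L ^ 2 ≤ z.2 ∧
      (z.1 = x0 + (vshift γ L A1).1 + 2 * (2 : ℝ) ^ (-r) * L / A1 ∨
        z.2 = y0 + (vshift γ L A1).2 + L ^ 2 - (2 : ℝ) ^ (-r) * L ^ 2) := by
  have hδ0 : (0 : ℝ) < (2 : ℝ) ^ (-r) := by positivity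
  obtain ⟨w1, w2, w3, w4⟩ := width_bounds hL hA hδ0 hδ
  rw [DeltaLt, Plt, setP_eq, two_rpow_width] at hz
  rw [setP_eq]
  generalize (2 : ℝ) ^ (-r) * L ^ 2 = k at *
  generalize 2 * (2 : ℝ) ^ (-r) * L / A1 = w at *
  generalize x0 + (vshift γ L A1).1 = X at *
  rw [show y0 + L ^ 2 + (vshift γ L A1).2 = y0 + (vshift γ L A1).2 + L ^ 2 by ring] at hz
  generalize y0 + (vshift γ L A1).2 = Y at *
  let T : Set (ℝ × ℝ) := {z | z ∈ Icc X (X + L) ×ˢ Icc Y (Y + L ^ 2) ∧ z.1 ≤ X + w ∧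
    Y + L ^ 2 - k ≤ z.2 ∧ (z.1 = X + w ∨ z.2 = Y + L ^ 2 - k)}
  have hT : IsClosed T := by
    refine (isClosed_Icc.prod isClosed_Icc).inter ?_
    refine (isClosed_le continuous_fst continuous_const).inter ?_
    refine (isClosed_le continuous_const continuous_snd).inter ?_
    exact (isClosed_eq continuous_fst continuous_const).union
      (isClosed_eq continuous_snd continuous_const)
  refine closure_minimal (t := T) ?_ hT hz
  intro z hz
  have hsub : Icc X (X + w) ×ˢ Icc (Y + L ^ 2 - k) (Y + L ^ 2) ⊆
      Icc X (X + L) ×ˢ Icc Y (Y + L ^ 2) :=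
    prod_mono (Icc_subset_Icc le_rfl (by linarith)) (Icc_subset_Icc (by linarith) le_rfl)
  obtain ⟨g1, ⟨⟨g2, g3⟩, g4, g5⟩, g6⟩ := mem_of_mem_frontier_diff hsub hz
  refine ⟨hsub g1, g1.1.2, g1.2.1, ?_⟩
  by_contra! hne
  exact g6 ⟨⟨g2, lt_of_le_of_ne g1.1.2 hne.1⟩, lt_of_le_of_ne g1.2.1 hne.2.symm, g5⟩

lemma deltaRb_subset {r : ℝ} (hL : 0 < L) (hA : 10 ≤ A1) (hδ : (2 : ℝ) ^ (-r) ≤ 1 / 2)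
    {z : ℝ × ℝ} (hz : z ∈ DeltaRb γ x0 y0 L A1 r) :
    z ∈ setP γ x0 y0 L A1 ∧
      x0 + (vshift γ L A1).1 + L - 2 * (2 : ℝ) ^ (-r) * L / A1 ≤ z.1 ∧
      z.2 ≤ y0 + (vshift γ L A1).2 + (2 : ℝ) ^ (-r) * L ^ 2 ∧
      (z.1 = x0 + (vshift γ L A1).1 + L - 2 * (2 : ℝ) ^ (-r) * L / A1 ∨
        z.2 = y0 + (vshift γ L A1).2 + (2 : ℝ) ^ (-r) * L ^ 2) := by
  have hδ0 : (0 : ℝ) < (2 : ℝ) ^ (-r) := by positivity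
  obtain ⟨w1, w2, w3, w4⟩ := width_bounds hL hA hδ0 hδ
  rw [DeltaRb, Prb, setP_eq, two_rpow_width] at hz
  rw [setP_eq]
  generalize (2 : ℝ) ^ (-r) * L ^ 2 = k at *
  generalize 2 * (2 : ℝ) ^ (-r) * L / A1 = w at *
  rw [show x0 + L + (vshift γ L A1).1 = x0 + (vshift γ L A1).1 + L by ring] at hz
  generalize x0 + (vshift γ L A1).1 = X at *
  generalize y0 + (vshift γ L A1).2 = Y at *
  let T : Set (ℝ × ℝ) := {z | z ∈ Icc X (X + L) ×ˢ Icc Y (Y + L ^ 2) ∧ X + L - w ≤ z.1 ∧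
    z.2 ≤ Y + k ∧ (z.1 = X + L - w ∨ z.2 = Y + k)}
  have hT : IsClosed T := by
    refine (isClosed_Icc.prod isClosed_Icc).inter ?_
    refine (isClosed_le continuous_const continuous_fst).inter ?_
    refine (isClosed_le continuous_snd continuous_const).inter ?_
    exact (isClosed_eq continuous_fst continuous_const).union
      (isClosed_eq continuous_snd continuous_const)
  refine closure_minimal (t := T) ?_ hT hz
  intro z hz
  have hsub : Icc (X + L - w) (X + L) ×ˢ Icc Y (Y + k) ⊆
      Icc X (X + L) ×ˢ Icc Y (Y + L ^ 2) :=
    prod_mono (Icc_subset_Icc (by linarith) le_rfl) (Icc_subset_Icc le_rfl (by linarith))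
  obtain ⟨g1, ⟨⟨g2, g3⟩, g4, g5⟩, g6⟩ := mem_of_mem_frontier_diff hsub hz
  refine ⟨hsub g1, g1.1.1, g1.2.2, ?_⟩
  by_contra! hne
  exact g6 ⟨⟨lt_of_le_of_ne g1.1.1 hne.1.symm, g3⟩, g4, lt_of_le_of_ne g1.2.2 hne.2⟩

/-- At `r = 1` the corner boxes have width `L/A₁` and height `L²/2`, so a point of `P^c` in the
upper half of `P` is at distance at least `L/A₁` from the left side, and one in the lower half is
that far from the right side. -/
lemma pcore_cases {z : ℝ × ℝ} (hz : z ∈ Pcore γ x0 y0 L A1) :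
    (y0 + (vshift γ L A1).2 + L ^ 2 / 2 ≤ z.2 → x0 + (vshift γ L A1).1 + L / A1 ≤ z.1) ∧
      (z.2 ≤ y0 + (vshift γ L A1).2 + L ^ 2 / 2 →
        z.1 ≤ x0 + (vshift γ L A1).1 + L - L / A1) := by
  obtain ⟨hP, hn⟩ := hz
  rw [setP_eq] at hP
  obtain ⟨⟨a1, a2⟩, a3, a4⟩ := hP
  have e1 : (2 : ℝ) ^ (-((1 : ℝ) - 1)) * L / A1 = L / A1 := by simp
  have e2 : (2 : ℝ) ^ (-(1 : ℝ)) * L ^ 2 = L ^ 2 / 2 := by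
    rw [Real.rpow_neg_one]
    ring
  rw [Plt, Prb, e1, e2, mem_union, not_or] at hn
  constructor
  · intro h
    by_contra! h'
    exact hn.1 ⟨⟨a1, h'.le⟩, by linarith, by linarith⟩
  · intro h
    by_contra! h'
    exact hn.2 ⟨⟨by linarith, by linarith⟩, a3, h⟩

end Sets

/-- **Fibre lengths of the return segments into `P`.** For `γ ∈ {γ_adj, γ_opp}`
there are `0 < c < C` and `A* ≥ 1` such that for all `A₁ ≥ A*` and every
`(1,2)`-cube `Q`: (a) for `z ∈ P^c` and `y ∈ φ(z,−,W₁)`,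
`m(I(y,+,P)) ∼ ℓ(I)/A₁`; and (b) for `r ≥ 1`, `z ∈ Δ_r^{lt} ∪ Δ_r^{rb}` and
`y ∈ φ(z,−,W₁)`, `m(I(y,+,P)) ∼ 2^{-r}·ℓ(I)/A₁`. -/
theorem return_fibre_lengths (γ : ℝ → ℝ × ℝ) (hγ : γ = gAdj ∨ γ = gOpp) :
    ∃ c C Astar : ℝ, 0 < c ∧ c < C ∧ 1 ≤ Astar ∧
      ∀ A1 : ℝ, Astar ≤ A1 → ∀ x0 y0 L : ℝ, 0 < L →
        (∀ z ∈ Pcore γ x0 y0 L A1, ∀ y ∈ phiM γ z (setW1 γ x0 y0 L A1),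
          ENNReal.ofReal (c * L / A1) ≤
              volume (IsetP γ y (setP γ x0 y0 L A1)) ∧
            volume (IsetP γ y (setP γ x0 y0 L A1)) ≤ ENNReal.ofReal (C * L / A1)) ∧
        ∀ r : ℝ, 1 ≤ r →
          ∀ z ∈ DeltaLt γ x0 y0 L A1 r ∪ DeltaRb γ x0 y0 L A1 r,
            ∀ y ∈ phiM γ z (setW1 γ x0 y0 L A1),
              ENNReal.ofReal (c * (2:ℝ) ^ (-r) * L / A1) ≤
                  volume (IsetP γ y (setP γ x0 y0 L A1)) ∧
                volume (IsetP γ y (setP γ x0 y0 L A1)) ≤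
                  ENNReal.ofReal (C * (2:ℝ) ^ (-r) * L / A1) := by
  refine ⟨1 / 48, 3, 10, by norm_num, by norm_num, by norm_num, ?_⟩
  intro A1 hA x0 y0 L hL
  refine ⟨fun z hz y hy => ?_, fun r hr z hz y hy => ?_⟩
  · obtain ⟨t0, ht0, hz1, hz2⟩ := exists_param hγ hL hA hz.1 hy
    obtain ⟨hlo, hhi⟩ := tilQ_fst_bounds hγ hy.1.1
    obtain ⟨c1, c2⟩ := pcore_cases hz
    rw [IsetP_eq hγ hL hA hy.1.1]
    rw [hz1, hz2] at c1 c2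
    exact fibre_core hL hA hlo hhi ht0 c1 c2
  · have hδ0 : (0 : ℝ) < (2 : ℝ) ^ (-r) := by positivity
    have hδ : (2 : ℝ) ^ (-r) ≤ 1 / 2 := by
      calc (2 : ℝ) ^ (-r) ≤ (2 : ℝ) ^ (-1 : ℝ) :=
            Real.rpow_le_rpow_of_exponent_le (by norm_num) (by linarith)
        _ = 1 / 2 := by rw [Real.rpow_neg_one]; norm_num
    obtain ⟨hlo, hhi⟩ := tilQ_fst_bounds hγ hy.1.1
    rw [IsetP_eq hγ hL hA hy.1.1]
    rcases hz with hz | hz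
    · obtain ⟨hP, d1, d2, d3⟩ := deltaLt_subset hL hA hδ hz
      obtain ⟨t0, ht0, hz1, hz2⟩ := exists_param hγ hL hA hP hy
      rw [hz1] at d1 d3
      rw [hz2] at d2 d3
      exact fibre_lt hL hA hlo hhi ht0 hδ0 hδ d1 d2 d3
    · obtain ⟨hP, d1, d2, d3⟩ := deltaRb_subset hL hA hδ hz
      obtain ⟨t0, ht0, hz1, hz2⟩ := exists_param hγ hL hA hP hy
      rw [hz1] at d1 d3
      rw [hz2] at d2 d3
      exact fibre_rb hL hA hlo hhi ht0 hδ0 hδ d1 d2 d3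

end
end

section
/- Let n≥1, α>0, δ>0 and K≥0. Let f:ℝ^n→ℂ be measurable and satisfy |f(x)−f(y)|≤K·|x−y|^α whenever |x−y|≤√n·δ. Let η∈C_c^∞(ℝ^n) with η≥0, supp η⊂B(0,δ/2) and ∫η=1, and set h=f*η (convolution). Then ‖f−h‖_{BMO^{1,α}} ≤ C·K, where C depends only on n and α. -/
/-!
The oscillation of `g = f - f * η` over a cube of side `l` is at most `l ^ (-α) * B` as soon
as `‖g x - g y‖ ≤ B` on the cube (`osc1_le_of_pairwise`), so it is enough to bound these
differences by `2 K (√n l) ^ α`.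

Averaging the Hölder condition against `η` shows that `f * η` satisfies the same condition as `f`
(`mollify_holder`). If `l ≤ δ`, all differences in the cube are at scale at most `√n δ`, so the
conditions for `f` and `f * η` give the bound. If `l > δ`, then `‖g x‖ ≤ K (δ / 2) ^ α` at every
point, because `η` averages `f` over a ball of radius `δ / 2` (`norm_sub_mollify_le`).
-/

open MeasureTheory

noncomputable section

/-- An ordinary axis-parallel cube in `ℝⁿ`, with centre `c` and sidelength `l > 0`. -/
structure Cube (n : ℕ) where
  c : EuclideanSpace ℝ (Fin n)
  l : ℝ
  l_pos : 0 < l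

/-- The underlying set of a cube. -/
def Cube.set {n : ℕ} (Q : Cube n) : Set (EuclideanSpace ℝ (Fin n)) :=
  {x | ∀ i, |x i - Q.c i| ≤ Q.l / 2}

/-- The fractional mean oscillation
`O^{1,α}(b;Q) = |Q|^{-α/n} (1/|Q|) ∫_Q |b - ⟨b⟩_Q|`, with `|Q| = ℓ(Q)^n`. -/
def osc1 {n : ℕ} (α : ℝ) (b : EuclideanSpace ℝ (Fin n) → ℂ) (Q : Cube n) : ℝ :=
  ((Q.l ^ n) : ℝ) ^ (-(α / n)) * ⨍ x in Q.set, ‖b x - ⨍ y in Q.set, b y‖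

variable {n : ℕ}

lemma Cube.norm_sub_le (Q : Cube n) {x y : EuclideanSpace ℝ (Fin n)}
    (hx : x ∈ Q.set) (hy : y ∈ Q.set) : ‖x - y‖ ≤ Real.sqrt n * Q.l := by
  have hl := Q.l_pos
  have h : ∀ i, ‖(x - y) i‖ ^ 2 ≤ Q.l ^ 2 := by
    intro i
    have h1 := abs_le.mp (hx i)
    have h2 := abs_le.mp (hy i)
    rw [Real.norm_eq_abs, sq_abs, PiLp.sub_apply]
    exact sq_le_sq' (by linarith) (by linarith)
  rw [EuclideanSpace.norm_eq]
  calc Real.sqrt (∑ i, ‖(x - y) i‖ ^ 2) ≤ Real.sqrt (n * Q.l ^ 2) := by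
        apply Real.sqrt_le_sqrt
        calc ∑ i, ‖(x - y) i‖ ^ 2 ≤ ∑ _i : Fin n, Q.l ^ 2 := Finset.sum_le_sum fun i _ => h i
          _ = n * Q.l ^ 2 := by simp
    _ = Real.sqrt n * Q.l := by
        rw [Real.sqrt_mul (Nat.cast_nonneg n), Real.sqrt_sq hl.le]

lemma Cube.center_mem (Q : Cube n) : Q.c ∈ Q.set := by
  intro i
  have := Q.l_pos
  simp only [sub_self, abs_zero]
  linarith

lemma Cube.isCompact (Q : Cube n) : IsCompact Q.set := by
  apply Metric.isCompact_of_isClosed_isBounded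
  · simp only [Cube.set, Set.ofPred_forall]
    exact isClosed_iInter fun i => isClosed_le (by fun_prop) (by fun_prop)
  · refine (Metric.isBounded_closedBall (x := Q.c) (r := Real.sqrt n * Q.l)).subset
      fun x hx => ?_
    rw [mem_closedBall_iff_norm]
    exact Q.norm_sub_le hx Q.center_mem

lemma Cube.volume_ne_zero (Q : Cube n) : volume Q.set ≠ 0 := by
  have hl := Q.l_pos
  have hsub : Metric.ball Q.c (Q.l / 2) ⊆ Q.set := by
    intro x hx i
    rw [mem_ball_iff_norm] at hx
    have := PiLp.norm_apply_le (x - Q.c) i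
    rw [Real.norm_eq_abs, PiLp.sub_apply] at this
    linarith
  exact ((Metric.measure_ball_pos volume Q.c (by linarith)).trans_le (measure_mono hsub)).ne'

lemma osc1_le_of_pairwise {α B : ℝ} {g : EuclideanSpace ℝ (Fin n) → ℂ} (hn : 1 ≤ n)
    (hg : Continuous g) (Q : Cube n)
    (hB : ∀ x ∈ Q.set, ∀ y ∈ Q.set, ‖g x - g y‖ ≤ B) :
    osc1 α g Q ≤ Q.l ^ (-α) * B := by
  have hl := Q.l_pos
  have hn0 : (n : ℝ) ≠ 0 := by positivity
  have hpow : ((Q.l ^ n) : ℝ) ^ (-(α / n)) = Q.l ^ (-α) := by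
    rw [← Real.rpow_natCast, ← Real.rpow_mul hl.le]
    congr 1
    field_simp
  have hmeas : MeasurableSet Q.set := Q.isCompact.measurableSet
  have htop : volume Q.set ≠ ⊤ := Q.isCompact.measure_ne_top
  have key : ∀ x ∈ Q.set, ‖g x - ⨍ y in Q.set, g y‖ ≤ B := by
    intro x hx
    have : (⨍ y in Q.set, g y) ∈ Metric.closedBall (g x) B := by
      refine (convex_closedBall _ _).set_average_mem Metric.isClosed_closedBall
        Q.volume_ne_zero htop ?_ (hg.continuousOn.integrableOn_compact Q.isCompact)
      filter_upwards [ae_restrict_mem hmeas] with y hy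
      rw [mem_closedBall_iff_norm]
      exact hB y hy x hx
    rw [mem_closedBall_iff_norm, norm_sub_rev] at this
    exact this
  have h2 : (⨍ x in Q.set, ‖g x - ⨍ y in Q.set, g y‖) ∈ Set.Iic B := by
    refine (convex_Iic B).set_average_mem isClosed_Iic Q.volume_ne_zero htop ?_
      (Continuous.continuousOn (by fun_prop) |>.integrableOn_compact Q.isCompact)
    filter_upwards [ae_restrict_mem hmeas] with x hx
    exact key x hx
  rw [osc1, hpow]
  exact mul_le_mul_of_nonneg_left h2 (Real.rpow_nonneg hl.le _)

lemma continuous_of_holder {α K r : ℝ} (hα : 0 < α) (hr : 0 < r)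
    {f : EuclideanSpace ℝ (Fin n) → ℂ}
    (hf : ∀ x y, ‖x - y‖ ≤ r → ‖f x - f y‖ ≤ K * ‖x - y‖ ^ α) : Continuous f := by
  rw [continuous_iff_continuousAt]
  intro x
  rw [ContinuousAt, tendsto_iff_norm_sub_tendsto_zero]
  have hlim : Filter.Tendsto (fun y => K * ‖y - x‖ ^ α) (nhds x) (nhds 0) := by
    have hc : Continuous fun y : EuclideanSpace ℝ (Fin n) => K * ‖y - x‖ ^ α :=
      continuous_const.mul ((by fun_prop : Continuous fun y => ‖y - x‖).rpow_const
        fun _ => Or.inr hα.le)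
    simpa [Real.zero_rpow hα.ne'] using hc.tendsto x
  refine squeeze_zero' (Filter.Eventually.of_forall fun _ => norm_nonneg _) ?_ hlim
  filter_upwards [Metric.closedBall_mem_nhds x hr] with y hy
  exact hf y x (by rwa [mem_closedBall_iff_norm] at hy)

/-- Integrating a complex function against a probability density `η` does not exceed a bound that
holds on the support of `η`. -/
lemma norm_integral_density_le {η : EuclideanSpace ℝ (Fin n) → ℝ} {B : ℝ}
    {u : EuclideanSpace ℝ (Fin n) → ℂ} (hη0 : ∀ x, 0 ≤ η x) (hηint : Integrable η)
    (hη1 : ∫ x, η x = 1) (hu : ∀ y, η y ≠ 0 → ‖u y‖ ≤ B) :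
    ‖∫ y, (η y : ℂ) * u y‖ ≤ B := by
  calc ‖∫ y, (η y : ℂ) * u y‖ ≤ ∫ y, η y * B := by
        refine norm_integral_le_of_norm_le (hηint.mul_const B) (Filter.Eventually.of_forall ?_)
        intro y
        rw [norm_mul, Complex.norm_real, Real.norm_of_nonneg (hη0 y)]
        by_cases h : η y = 0
        · simp [h]
        · exact mul_le_mul_of_nonneg_left (hu y h) (hη0 y)
    _ = B := by rw [integral_mul_const, hη1, one_mul]

lemma integrable_density_mul {η : EuclideanSpace ℝ (Fin n) → ℝ}
    {u : EuclideanSpace ℝ (Fin n) → ℂ} (hη : Continuous η) (hηc : HasCompactSupport η)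
    (hu : Continuous u) : Integrable fun y => (η y : ℂ) * u y := by
  refine Continuous.integrable_of_hasCompactSupport (by fun_prop) ?_
  exact HasCompactSupport.mul_right (hηc.comp_left (g := fun t : ℝ => (t : ℂ)) (by simp))

/-- The mollification inherits the Hölder condition of `f`, with the same constant and scale. -/
lemma mollify_holder {α K r : ℝ} {f : EuclideanSpace ℝ (Fin n) → ℂ} (hfc : Continuous f)
    (hf : ∀ x y, ‖x - y‖ ≤ r → ‖f x - f y‖ ≤ K * ‖x - y‖ ^ α)
    {η : EuclideanSpace ℝ (Fin n) → ℝ} (hη : Continuous η) (hηc : HasCompactSupport η)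
    (hη0 : ∀ x, 0 ≤ η x) (hη1 : ∫ x, η x = 1) (x y : EuclideanSpace ℝ (Fin n))
    (hxy : ‖x - y‖ ≤ r) :
    ‖(∫ z, (η z : ℂ) * f (x - z)) - ∫ z, (η z : ℂ) * f (y - z)‖ ≤ K * ‖x - y‖ ^ α := by
  rw [← integral_sub (integrable_density_mul hη hηc (by fun_prop))
    (integrable_density_mul hη hηc (by fun_prop))]
  simp only [← mul_sub]
  refine norm_integral_density_le hη0 (hη.integrable_of_hasCompactSupport hηc) hη1 fun z _ => ?_
  have h := hf (x - z) (y - z)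
  rw [sub_sub_sub_cancel_right] at h
  exact h hxy

/-- If `η` lives in a ball of radius `ρ` within the scale of the Hölder condition, mollifying
changes `f` by at most `K * ρ ^ α` at each point. -/
lemma norm_sub_mollify_le {α K r ρ : ℝ} (hα : 0 < α) (hK : 0 ≤ K) (hρ : ρ ≤ r)
    {f : EuclideanSpace ℝ (Fin n) → ℂ} (hfc : Continuous f)
    (hf : ∀ x y, ‖x - y‖ ≤ r → ‖f x - f y‖ ≤ K * ‖x - y‖ ^ α)
    {η : EuclideanSpace ℝ (Fin n) → ℝ} (hη : Continuous η) (hηc : HasCompactSupport η)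
    (hη0 : ∀ x, 0 ≤ η x) (hηs : Function.support η ⊆ Metric.ball 0 ρ)
    (hη1 : ∫ x, η x = 1) (x : EuclideanSpace ℝ (Fin n)) :
    ‖f x - ∫ z, (η z : ℂ) * f (x - z)‖ ≤ K * ρ ^ α := by
  have hfx : f x = ∫ z, (η z : ℂ) * f x := by
    rw [integral_mul_const, integral_complex_ofReal, hη1, Complex.ofReal_one, one_mul]
  rw [hfx, ← integral_sub (integrable_density_mul hη hηc (by fun_prop))
    (integrable_density_mul hη hηc (by fun_prop))]
  simp only [← mul_sub]
  refine norm_integral_density_le hη0 (hη.integrable_of_hasCompactSupport hηc) hη1 fun z hz => ?_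
  have hzn : ‖z‖ < ρ := mem_ball_zero_iff.mp (hηs hz)
  have h := hf x (x - z)
  rw [sub_sub_cancel] at h
  refine (h (hzn.le.trans hρ)).trans ?_
  gcongr

/-- **BMO-approximation by mollification of functions Hölder at small scales.**
If `f` is `K`-Hölder of exponent `α` at scales `≤ √n·δ` and `η` is a nonnegative
smooth bump supported in `B(0, δ/2)` with `∫ η = 1`, then the mollification
`h = f * η` satisfies `‖f − h‖_{BMO^{1,α}} ≤ C·K`, where `C` depends only on `n`
and `α`. -/
theorem mollification_bmo_approx (n : ℕ) (hn : 1 ≤ n) (α : ℝ) (hα : 0 < α) :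
    ∃ C : ℝ, 0 < C ∧
      ∀ δ K : ℝ, 0 < δ → 0 ≤ K →
      ∀ f : EuclideanSpace ℝ (Fin n) → ℂ, Measurable f →
        (∀ x y : EuclideanSpace ℝ (Fin n), ‖x - y‖ ≤ Real.sqrt n * δ →
          ‖f x - f y‖ ≤ K * ‖x - y‖ ^ α) →
      ∀ η : EuclideanSpace ℝ (Fin n) → ℝ, ContDiff ℝ (⊤ : ℕ∞) η → HasCompactSupport η →
        (∀ x, 0 ≤ η x) → Function.support η ⊆ Metric.ball 0 (δ / 2) →
        (∫ x, η x) = 1 →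
        ∀ Q : Cube n,
          osc1 α (fun x => f x - ∫ y, (η y : ℂ) * f (x - y)) Q ≤ C * K := by
  have hs1 : 1 ≤ Real.sqrt n := Real.one_le_sqrt.mpr (by exact_mod_cast hn)
  have hs0 : 0 < Real.sqrt n := by linarith
  refine ⟨2 * Real.sqrt n ^ α, by positivity, ?_⟩
  intro δ K hδ hK f _ hf η hηsm hηc hη0 hηs hη1 Q
  have hl := Q.l_pos
  have hr : 0 < Real.sqrt n * δ := by positivity
  have hη := hηsm.continuous
  have hfc : Continuous f := continuous_of_holder hα hr hf
  have hh := mollify_holder hfc hf hη hηc hη0 hη1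
  have hhc : Continuous fun x => ∫ z, (η z : ℂ) * f (x - z) := continuous_of_holder hα hr hh
  have hρ : δ / 2 ≤ Real.sqrt n * δ := by nlinarith
  have hsmall := norm_sub_mollify_le hα hK hρ hfc hf hη hηc hη0 hηs hη1
  have hB : ∀ x ∈ Q.set, ∀ y ∈ Q.set,
      ‖(f x - ∫ z, (η z : ℂ) * f (x - z)) - (f y - ∫ z, (η z : ℂ) * f (y - z))‖
        ≤ 2 * (K * (Real.sqrt n * Q.l) ^ α) := by
    intro x hx y hy
    have hxy := Q.norm_sub_le hx hy
    rcases le_or_gt Q.l δ with hle | hlt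
    · have hscale : ‖x - y‖ ≤ Real.sqrt n * δ :=
        hxy.trans (mul_le_mul_of_nonneg_left hle hs0.le)
      have hmono : K * ‖x - y‖ ^ α ≤ K * (Real.sqrt n * Q.l) ^ α := by gcongr
      rw [sub_sub_sub_comm]
      linarith [norm_sub_le (f x - f y)
        ((∫ z, (η z : ℂ) * f (x - z)) - ∫ z, (η z : ℂ) * f (y - z)),
        hf x y hscale, hh x y hscale]
    · have hcomp : δ / 2 ≤ Real.sqrt n * Q.l := by nlinarith
      have hmono : K * (δ / 2) ^ α ≤ K * (Real.sqrt n * Q.l) ^ α := by gcongr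
      linarith [norm_sub_le (f x - ∫ z, (η z : ℂ) * f (x - z))
        (f y - ∫ z, (η z : ℂ) * f (y - z)), hsmall x, hsmall y]
  refine (osc1_le_of_pairwise hn (hfc.sub hhc) Q hB).trans_eq ?_
  have hcancel : Q.l ^ (-α) * Q.l ^ α = 1 := by
    rw [← Real.rpow_add hl, neg_add_cancel, Real.rpow_zero]
  rw [Real.mul_rpow hs0.le hl.le]
  linear_combination (2 * K * Real.sqrt n ^ α) * hcancel

end
end
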